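/- Let ρ be a symmetric (even) probability density on ℝ such that ∬ |ρ(x)ρ(y)/(x(x−y))| extended appropriately is integrable in the principal-value sense. Then ∫ H(ρ)(x) (1/x) ρ(x) dx = 0, where H(ρ)(x) = p.v.∫ ρ(y)/(x−y) dy is the Hilbert transform. -/

import Mathlib

open MeasureTheory Filter

/-!
Put `g x = ρ x / x` and let `F`, `G`, `K` be the Cauchy transforms of `ρ`, `g` and
`k = ρ * H g + g * H ρ`. At the axis `F` tends to `H ρ - i π ρ` a.e., and likewise for `G` and `K`,
so `F * G - K` has vanishing imaginary boundary values almost everywhere. This alone would not make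
it continue across the axis, but the principal values exist at every `x ≠ 0`, so away from `0` the
axis is a countable union of closed sets on which `re F` and `re G` are bounded. By Baire's theorem
a nonempty singular set would have an open piece inside one of them; there the Poisson integral of
an integrable function dominates `|im (F * G - K)|`, a Phragmén–Lindelöf argument carries the bound
over the complementary gaps, and dominated convergence together with Cauchy's integral formula gives
the continuation, a contradiction. The singularity at `0` is removable by growth, and the resulting
entire function vanishes by a Liouville argument.

Comparing the coefficients of `1 / z` at infinity in `F * G = K` yields `∫ k = 0`. Since
`x * H g x = H ρ x + ∫ g`, this reads `2 * ∫ H ρ * ρ / x = -(∫ ρ / x) ^ 2`, and the right-hand side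
vanishes for even `ρ`.
-/

open Set Metric Topology Complex
open scoped Real ComplexConjugate

/-- The Cauchy transform `z ↦ ∫ f y / (z - y) dy` of a real function. Above the real point `x` its
real part is an Abel mean of the truncated Hilbert transforms of `f` at `x`, and minus its imaginary
part is `π` times the Poisson integral of `f`. -/
noncomputable def cauchyTransform (f : ℝ → ℝ) (z : ℂ) : ℂ := ∫ y, (f y : ℂ) / (z - y)

section CauchyTransform

lemma sub_ofReal_ne_zero {z : ℂ} (hz : z.im ≠ 0) (y : ℝ) : z - y ≠ 0 :=
  fun h => hz (by simpa using congrArg Complex.im h)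

lemma abs_im_le_norm_sub_ofReal (z : ℂ) (y : ℝ) : |z.im| ≤ ‖z - y‖ := by
  simpa using abs_im_le_norm (z - y)

lemma abs_re_sub_le_norm_sub_ofReal (z : ℂ) (y : ℝ) : |z.re - y| ≤ ‖z - y‖ := by
  simpa using abs_re_le_norm (z - y)

lemma norm_ofReal_div_sub_le (a : ℝ) {z : ℂ} (hz : z.im ≠ 0) (y : ℝ) :
    ‖(a : ℂ) / (z - y)‖ ≤ |a| / |z.im| := by
  rw [norm_div, norm_real, Real.norm_eq_abs]
  exact div_le_div_of_nonneg_left (abs_nonneg a) (abs_pos.2 hz) (abs_im_le_norm_sub_ofReal z y)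

variable {f g : ℝ → ℝ} {z : ℂ}

lemma aestronglyMeasurable_div_sub (hf : Integrable f) (z : ℂ) :
    AEStronglyMeasurable (fun y : ℝ => (f y : ℂ) / (z - y)) :=
  hf.ofReal.aestronglyMeasurable.div₀ (by fun_prop)

lemma integrable_div_sub (hf : Integrable f) (hz : z.im ≠ 0) :
    Integrable (fun y : ℝ => (f y : ℂ) / (z - y)) :=
  (hf.abs.div_const |z.im|).mono' (aestronglyMeasurable_div_sub hf z)
    (.of_forall fun y => norm_ofReal_div_sub_le (f y) hz y)

lemma cauchyTransform_add (hf : Integrable f) (hg : Integrable g) (hz : z.im ≠ 0) :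
    cauchyTransform (fun y => f y + g y) z = cauchyTransform f z + cauchyTransform g z := by
  simp only [cauchyTransform, ofReal_add, add_div]
  exact integral_add (integrable_div_sub hf hz) (integrable_div_sub hg hz)

lemma cauchyTransform_const_mul (c : ℝ) (f : ℝ → ℝ) (z : ℂ) :
    cauchyTransform (fun y => c * f y) z = c * cauchyTransform f z := by
  simp only [cauchyTransform, ofReal_mul, mul_div_assoc, integral_const_mul]

lemma cauchyTransform_conj (f : ℝ → ℝ) (z : ℂ) :
    cauchyTransform f (conj z) = conj (cauchyTransform f z) := by
  simp [cauchyTransform, ← integral_conj]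

lemma abs_im_mul_norm_cauchyTransform_le (hf : Integrable f) (hz : z.im ≠ 0) :
    |z.im| * ‖cauchyTransform f z‖ ≤ ∫ y, |f y| := by
  have him : 0 < |z.im| := abs_pos.2 hz
  rw [mul_comm, ← le_div_iff₀ him, ← integral_div]
  exact norm_integral_le_of_norm_le (hf.abs.div_const _)
    (.of_forall fun y => norm_ofReal_div_sub_le (f y) hz y)

lemma half_abs_im_le_of_mem_ball {w : ℂ} (hw : w ∈ ball z (|z.im| / 2)) : |z.im| / 2 ≤ |w.im| := by
  have hdist : |z.im - w.im| ≤ ‖w - z‖ := by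
    simpa [norm_sub_rev] using abs_im_le_norm (z - w)
  have hw' : ‖w - z‖ < |z.im| / 2 := mem_ball_iff_norm.1 hw
  linarith [abs_sub_abs_le_abs_sub z.im w.im]

lemma differentiableAt_cauchyTransform (hf : Integrable f) (hz : z.im ≠ 0) :
    DifferentiableAt ℂ (cauchyTransform f) z := by
  have him : 0 < |z.im| := abs_pos.2 hz
  refine (hasDerivAt_integral_of_dominated_loc_of_deriv_le (μ := volume)
    (F' := fun (w : ℂ) (y : ℝ) => -(f y : ℂ) / (w - y) ^ 2)
    (bound := fun y => |f y| / (|z.im| / 2) ^ 2) (ball_mem_nhds z (half_pos him))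
    (.of_forall fun w => aestronglyMeasurable_div_sub hf w) (integrable_div_sub hf hz)
    (hf.ofReal.aestronglyMeasurable.neg.div₀ (by fun_prop))
    (.of_forall fun y w hw => ?_) (hf.abs.div_const _)
    (.of_forall fun y w hw => ?_)).2.differentiableAt
  · rw [norm_div, norm_neg, norm_real, Real.norm_eq_abs, norm_pow]
    gcongr
    exact (half_abs_im_le_of_mem_ball hw).trans (abs_im_le_norm_sub_ofReal w y)
  · have hw_im : w.im ≠ 0 := abs_pos.1 ((half_pos him).trans_le (half_abs_im_le_of_mem_ball hw))
    exact ((hasDerivAt_const w (f y : ℂ)).fun_div ((hasDerivAt_id w).sub_const (y : ℂ))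
      (sub_ofReal_ne_zero hw_im y)).congr_deriv (by simp)

lemma continuous_cauchyTransform_add_mul_I (hf : Integrable f) {t : ℝ} (ht : t ≠ 0) :
    Continuous fun x : ℝ => cauchyTransform f (x + t * I) :=
  continuous_iff_continuousAt.2 fun x =>
    (differentiableAt_cauchyTransform hf (z := x + t * I) (by simpa using ht)).continuousAt.comp'
      (f := fun x : ℝ => (x + t * I : ℂ)) (by fun_prop)

lemma re_cauchyTransform (hf : Integrable f) (hz : z.im ≠ 0) :
    (cauchyTransform f z).re = ∫ y, f y * ((z.re - y) / ((z.re - y) ^ 2 + z.im ^ 2)) := by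
  refine (integral_re (𝕜 := ℂ) (integrable_div_sub hf hz)).symm.trans (integral_congr_ae ?_)
  filter_upwards with y
  simp [div_re, normSq_apply, ← sq, mul_div_assoc]

lemma im_cauchyTransform (hf : Integrable f) (hz : z.im ≠ 0) :
    (cauchyTransform f z).im = -∫ y, f y * (z.im / ((z.re - y) ^ 2 + z.im ^ 2)) := by
  rw [← integral_neg]
  refine (integral_im (𝕜 := ℂ) (integrable_div_sub hf hz)).symm.trans (integral_congr_ae ?_)
  filter_upwards with y
  simp [div_im, normSq_apply, ← sq, mul_div_assoc]

lemma integrable_mul_poissonKernel (hf : Integrable f) (hz : z.im ≠ 0) :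
    Integrable fun y => f y * (z.im / ((z.re - y) ^ 2 + z.im ^ 2)) := by
  refine ((integrable_div_sub hf hz).im.neg).congr (.of_forall fun y => ?_)
  simp [div_im, normSq_apply, ← sq, mul_div_assoc]

lemma abs_im_cauchyTransform_le (hf : Integrable f) (hz : 0 < z.im) :
    |(cauchyTransform f z).im| ≤ -(cauchyTransform (fun y => |f y|) z).im := by
  rw [im_cauchyTransform hf hz.ne', im_cauchyTransform hf.abs hz.ne', abs_neg, neg_neg]
  refine (abs_integral_le_integral_abs).trans_eq (integral_congr_ae (.of_forall fun y => ?_))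
  have hker : 0 ≤ z.im / ((z.re - y) ^ 2 + z.im ^ 2) := by positivity
  simp only [abs_mul, abs_of_nonneg hker]

lemma im_cauchyTransform_nonpos (hf : Integrable f) (hf_nonneg : 0 ≤ f) (hz : 0 < z.im) :
    (cauchyTransform f z).im ≤ 0 := by
  rw [im_cauchyTransform hf hz.ne', neg_nonpos]
  exact integral_nonneg fun y => mul_nonneg (hf_nonneg y) (by positivity)

end CauchyTransform

section AbelMeans

lemma integrable_and_integral_mul_setIntegral {V Y : Type*} [MeasurableSpace V]
    [MeasurableSpace Y] {μ : Measure V} {ν : Measure Y} [SFinite μ] [SFinite ν] {K : V → ℝ}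
    {h : Y → ℝ} {A : Set (V × Y)} (hK : Integrable K μ) (hK_nonneg : 0 ≤ᵐ[μ] K)
    (hh : AEStronglyMeasurable h ν) (hA : MeasurableSet A)
    (hint : Integrable (fun y => h y * ∫ v in {v | (v, y) ∈ A}, K v ∂μ) ν) :
    Integrable (fun v => K v * ∫ y in {y | (v, y) ∈ A}, h y ∂ν) μ ∧
      ∫ v, K v * ∫ y in {y | (v, y) ∈ A}, h y ∂ν ∂μ =
        ∫ y, h y * ∫ v in {v | (v, y) ∈ A}, K v ∂μ ∂ν := by
  let F : V × Y → ℝ := A.indicator fun p => K p.1 * h p.2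
  have hA_left (y : Y) : MeasurableSet {v | (v, y) ∈ A} := measurable_prodMk_right hA
  have hA_right (v : V) : MeasurableSet {y | (v, y) ∈ A} := measurable_prodMk_left hA
  have hF_left (y : Y) : (fun v => F (v, y)) = {v | (v, y) ∈ A}.indicator fun v => K v * h y := rfl
  have hF_right (v : V) : (fun y => F (v, y)) = {y | (v, y) ∈ A}.indicator fun y => K v * h y := rfl
  have hF : Integrable F (μ.prod ν) := by
    have hF_meas : AEStronglyMeasurable F (μ.prod ν) :=
      (hK.aestronglyMeasurable.comp_fst.mul hh.comp_snd).indicator hA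
    refine (integrable_prod_iff' hF_meas).2
      ⟨.of_forall fun y => ?_, hint.norm.congr (.of_forall fun y => ?_)⟩
    · rw [hF_left]
      exact (hK.mul_const _).indicator (hA_left y)
    · have hK_abs : ∀ᵐ v ∂μ.restrict {v | (v, y) ∈ A}, |K v| = K v :=
        ae_restrict_of_ae (hK_nonneg.mono fun v hv => abs_of_nonneg hv)
      have hnorm : (fun v => ‖F (v, y)‖) = {v | (v, y) ∈ A}.indicator fun v => |K v| * |h y| := by
        funext v
        rw [congrFun (hF_left y) v, norm_indicator_eq_indicator_norm]
        simp only [norm_mul, Real.norm_eq_abs]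
      simp only [hnorm]
      rw [integral_indicator (hA_left y), integral_mul_const, integral_congr_ae hK_abs,
        mul_comm (h y), norm_mul, Real.norm_eq_abs, Real.norm_eq_abs,
        abs_of_nonneg (integral_nonneg_of_ae (ae_restrict_of_ae hK_nonneg))]
  have hright (v : V) : K v * ∫ y in {y | (v, y) ∈ A}, h y ∂ν = ∫ y, F (v, y) ∂ν := by
    rw [hF_right, integral_indicator (hA_right v), integral_const_mul]
  have hleft (y : Y) : h y * ∫ v in {v | (v, y) ∈ A}, K v ∂μ = ∫ v, F (v, y) ∂μ := by
    rw [hF_left, integral_indicator (hA_left y), integral_mul_const, mul_comm]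
  simp only [hright, hleft]
  exact ⟨hF.integral_prod_left, integral_integral_swap hF⟩

lemma tendsto_setIntegral_Ioi_mul_comp_mul {w Φ : ℝ → ℝ} {L M : ℝ} (hw : IntegrableOn w (Ioi 0))
    (hΦ_bound : ∀ ε > 0, |Φ ε| ≤ M) (hΦ : Tendsto Φ (𝓝[>] 0) (𝓝 L))
    (hmeas : ∀ t > 0, AEStronglyMeasurable (fun v => w v * Φ (t * v)) (volume.restrict (Ioi 0))) :
    Tendsto (fun t => ∫ v in Ioi 0, w v * Φ (t * v)) (𝓝[>] 0) (𝓝 ((∫ v in Ioi 0, w v) * L)) := by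
  rw [← integral_mul_const]
  refine tendsto_integral_filter_of_dominated_convergence (fun v => |w v| * M)
    (eventually_mem_nhdsWithin.mono hmeas) ?_ (hw.abs.mul_const M) ?_
  · filter_upwards [self_mem_nhdsWithin] with t ht
    filter_upwards [ae_restrict_mem measurableSet_Ioi] with v hv
    rw [norm_mul, Real.norm_eq_abs, Real.norm_eq_abs]
    gcongr
    exact hΦ_bound _ (mul_pos ht hv)
  · filter_upwards [ae_restrict_mem measurableSet_Ioi] with v hv
    refine (hΦ.comp (tendsto_nhdsWithin_iff.2 ⟨?_, ?_⟩)).const_mul _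
    · exact ((continuous_mul_const v).tendsto' 0 0 (zero_mul v)).mono_left nhdsWithin_le_nhds
    · exact eventually_mem_nhdsWithin.mono fun t (ht : 0 < t) => mul_pos ht (mem_Ioi.1 hv)

lemma exists_forall_pos_abs_le_of_tendsto {Φ : ℝ → ℝ} {L C : ℝ} (hC : 0 ≤ C)
    (hΦ_decay : ∀ ε > 0, |Φ ε| ≤ C / ε) (hΦ : Tendsto Φ (𝓝[>] 0) (𝓝 L)) :
    ∃ M, ∀ ε > 0, |Φ ε| ≤ M := by
  have hnear : ∀ᶠ ε in 𝓝[>] 0, |Φ ε| < |L| + 1 := hΦ.abs.eventually_lt_const (by linarith)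
  obtain ⟨δ, hδ : 0 < δ, hsub⟩ := mem_nhdsGT_iff_exists_Ioo_subset.1 hnear
  refine ⟨max (|L| + 1) (C / δ), fun ε hε => ?_⟩
  rcases lt_or_ge ε δ with hlt | hge
  · exact (hsub ⟨hε, hlt⟩).le.trans (le_max_left _ _)
  · exact ((hΦ_decay ε hε).trans (by gcongr)).trans (le_max_right _ _)

/-- The probability density on `(0, ∞)` whose distribution function is `u² / (1 + u²)`. Averaging
truncations at level `t * v` against it produces the conjugate Poisson kernel at height `t`. -/
noncomputable def abelKernel (v : ℝ) : ℝ := 2 * v / (1 + v ^ 2) ^ 2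

lemma abelKernel_nonneg {v : ℝ} (hv : 0 ≤ v) : 0 ≤ abelKernel v := by
  unfold abelKernel
  positivity

lemma hasDerivAt_neg_inv_one_add_sq (v : ℝ) :
    HasDerivAt (fun v : ℝ => -(1 + v ^ 2)⁻¹) (abelKernel v) v := by
  have hne : 1 + v ^ 2 ≠ 0 := by positivity
  refine ((((hasDerivAt_id' v).fun_pow 2).const_add 1).fun_inv hne).fun_neg.congr_deriv ?_
  simp [abelKernel, neg_div]

lemma tendsto_neg_inv_one_add_sq : Tendsto (fun v : ℝ => -(1 + v ^ 2)⁻¹) atTop (𝓝 0) := by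
  simpa using (tendsto_inv_atTop_zero.comp
    (tendsto_atTop_add_const_left _ 1 (tendsto_pow_atTop (α := ℝ) two_ne_zero))).neg

lemma integrableOn_Ioi_abelKernel {u : ℝ} (hu : 0 ≤ u) : IntegrableOn abelKernel (Ioi u) :=
  integrableOn_Ioi_deriv_of_nonneg' (fun v _ => hasDerivAt_neg_inv_one_add_sq v)
    (fun _ hv => abelKernel_nonneg (hu.trans (le_of_lt hv))) tendsto_neg_inv_one_add_sq

lemma integral_Ioi_abelKernel {u : ℝ} (hu : 0 ≤ u) :
    ∫ v in Ioi u, abelKernel v = (1 + u ^ 2)⁻¹ := by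
  rw [integral_Ioi_of_hasDerivAt_of_nonneg' (fun v _ => hasDerivAt_neg_inv_one_add_sq v)
    (fun _ hv => abelKernel_nonneg (hu.trans (le_of_lt hv))) tendsto_neg_inv_one_add_sq]
  simp

lemma integral_Ioi_zero_abelKernel : ∫ v in Ioi 0, abelKernel v = 1 := by
  simp [integral_Ioi_abelKernel le_rfl]

lemma integral_Ici_abelKernel {u : ℝ} (hu : 0 ≤ u) :
    ∫ v in Ici u, abelKernel v ∂volume.restrict (Ioi 0) = (1 + u ^ 2)⁻¹ := by
  rw [Measure.restrict_congr_set (ae_restrict_of_ae Ioi_ae_eq_Ici.symm),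
    Measure.restrict_restrict measurableSet_Ioi, Ioi_inter_Ioi, sup_eq_left.2 hu,
    integral_Ioi_abelKernel hu]

lemma integral_Iic_abelKernel {u : ℝ} (hu : 0 ≤ u) :
    ∫ v in Iic u, abelKernel v ∂volume.restrict (Ioi 0) = 1 - (1 + u ^ 2)⁻¹ := by
  have hsplit := setIntegral_union (μ := volume) (Ioc_disjoint_Ioi (le_refl u)) measurableSet_Ioi
    ((integrableOn_Ioi_abelKernel le_rfl).mono_set Ioc_subset_Ioi_self)
    (integrableOn_Ioi_abelKernel hu)
  rw [Ioc_union_Ioi_eq_Ioi hu, integral_Ioi_zero_abelKernel, integral_Ioi_abelKernel hu] at hsplit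
  rw [Measure.restrict_restrict measurableSet_Iic, inter_comm, Ioi_inter_Iic]
  linarith

lemma hasDerivAt_two_mul_arctan_sub (v : ℝ) :
    HasDerivAt (fun v : ℝ => 2 * (Real.arctan v - v * (1 + v ^ 2)⁻¹)) (abelKernel v * (2 * v))
      v := by
  have hne : 1 + v ^ 2 ≠ 0 := by positivity
  refine (((Real.hasDerivAt_arctan v).fun_sub ((hasDerivAt_id' v).fun_mul
    ((((hasDerivAt_id' v).fun_pow 2).const_add 1).fun_inv hne))).const_mul 2).congr_deriv ?_
  simp only [abelKernel]
  field_simp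
  ring

lemma tendsto_two_mul_arctan_sub :
    Tendsto (fun v : ℝ => 2 * (Real.arctan v - v * (1 + v ^ 2)⁻¹)) atTop (𝓝 π) := by
  have harctan : Tendsto Real.arctan atTop (𝓝 (π / 2)) :=
    Real.tendsto_arctan_atTop.mono_right nhdsWithin_le_nhds
  have hrat : Tendsto (fun v : ℝ => v * (1 + v ^ 2)⁻¹) atTop (𝓝 0) := by
    refine squeeze_zero' ?_ ?_ tendsto_inv_atTop_zero
    · filter_upwards [eventually_gt_atTop 0] with v hv using by positivity
    · filter_upwards [eventually_gt_atTop 0] with v hv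
      rw [← div_eq_mul_inv, inv_eq_one_div, div_le_div_iff₀ (by positivity) hv]
      nlinarith
  convert (harctan.sub hrat).const_mul 2 using 2
  ring

lemma integrableOn_Ioi_abelKernel_mul :
    IntegrableOn (fun v => abelKernel v * (2 * v)) (Ioi 0) :=
  integrableOn_Ioi_deriv_of_nonneg' (fun v _ => hasDerivAt_two_mul_arctan_sub v)
    (fun _ hv => mul_nonneg (abelKernel_nonneg (le_of_lt hv))
      (mul_nonneg zero_le_two (le_of_lt hv))) tendsto_two_mul_arctan_sub

lemma integral_Ioi_abelKernel_mul : ∫ v in Ioi 0, abelKernel v * (2 * v) = π := by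
  rw [integral_Ioi_of_hasDerivAt_of_tendsto' (fun v _ => hasDerivAt_two_mul_arctan_sub v)
    integrableOn_Ioi_abelKernel_mul tendsto_two_mul_arctan_sub]
  simp

/-- The Hilbert transform of `f` at `x` with the interval `|x - y| < ε` cut out; its limit as
`ε → 0⁺` is the principal value. -/
noncomputable def truncatedHilbert (f : ℝ → ℝ) (x ε : ℝ) : ℝ :=
  ∫ y in {y | ε ≤ |x - y|}, f y / (x - y)

variable {f : ℝ → ℝ} {x t L : ℝ}

lemma abs_truncatedHilbert_le (hf : Integrable f) (x : ℝ) {ε : ℝ} (hε : 0 < ε) :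
    |truncatedHilbert f x ε| ≤ (∫ y, |f y|) / ε := by
  have hmeas : MeasurableSet {y : ℝ | ε ≤ |x - y|} :=
    measurableSet_le measurable_const (by fun_prop)
  rw [truncatedHilbert, ← integral_div, ← integral_indicator hmeas, ← Real.norm_eq_abs]
  refine norm_integral_le_of_norm_le (hf.abs.div_const ε) (.of_forall fun y => ?_)
  rw [norm_indicator_eq_indicator_norm]
  refine indicator_apply_le' (fun hy => ?_) fun _ => by positivity
  rw [norm_div, Real.norm_eq_abs, Real.norm_eq_abs]
  gcongr
  exact hy

lemma inv_one_add_sq_abs_div (ht : 0 < t) (s : ℝ) :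
    (1 + (|s| / t) ^ 2)⁻¹ = t ^ 2 / (s ^ 2 + t ^ 2) := by
  rw [div_pow, sq_abs, inv_eq_iff_eq_inv, inv_div]
  field_simp
  ring

lemma integrableOn_and_integral_abelKernel_mul_truncatedHilbert (hf : Integrable f) (x : ℝ)
    (ht : 0 < t) :
    IntegrableOn (fun v => abelKernel v * truncatedHilbert f x (t * v)) (Ioi 0) ∧
      ∫ v in Ioi 0, abelKernel v * truncatedHilbert f x (t * v) =
        (cauchyTransform f (x + t * I)).re := by
  have him : (x + t * I : ℂ).im ≠ 0 := by simpa using ht.ne'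
  let A : Set (ℝ × ℝ) := {p | t * p.1 ≤ |x - p.2|}
  have hA : MeasurableSet A := measurableSet_le (by fun_prop) (by fun_prop)
  have hdist (y : ℝ) : ∫ v in {v | (v, y) ∈ A}, abelKernel v
      ∂volume.restrict (Ioi 0) = 1 - (1 + (|x - y| / t) ^ 2)⁻¹ := by
    have hset : {v | (v, y) ∈ A} = Iic (|x - y| / t) := by
      ext v
      simp [A, le_div_iff₀ ht, mul_comm t]
    rw [hset, integral_Iic_abelKernel (by positivity)]
  have hkernel (y : ℝ) : f y / (x - y) * (1 - (1 + (|x - y| / t) ^ 2)⁻¹) =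
      f y * ((x - y) / ((x - y) ^ 2 + t ^ 2)) := by
    rw [inv_one_add_sq_abs_div ht]
    rcases eq_or_ne (x - y) 0 with h | h
    · simp [h]
    · field_simp
      ring
  have hint : Integrable fun y => f y * ((x - y) / ((x - y) ^ 2 + t ^ 2)) :=
    (integrable_div_sub hf him).re.congr
      (.of_forall fun y => by simp [div_re, normSq_apply, ← sq, mul_div_assoc])
  have hmix := integrable_and_integral_mul_setIntegral (h := fun y => f y / (x - y))
    (integrableOn_Ioi_abelKernel le_rfl)
    ((ae_restrict_mem measurableSet_Ioi).mono fun v hv => abelKernel_nonneg (le_of_lt hv))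
    (hf.aestronglyMeasurable.div₀ (by fun_prop)) hA
    (by simpa only [hdist, hkernel] using hint)
  simp only [hdist, hkernel] at hmix
  refine ⟨hmix.1, hmix.2.trans ?_⟩
  simp [re_cauchyTransform hf him]

/-- `L` is the Hilbert transform of `f` at `x` in the Abel sense: the boundary value at `x` of the
real part of the Cauchy transform. It exists wherever the principal value does. -/
def HasAbelHilbertAt (f : ℝ → ℝ) (L x : ℝ) : Prop :=
  Tendsto (fun t : ℝ => (cauchyTransform f (x + t * I)).re) (𝓝[>] 0) (𝓝 L)

theorem hasAbelHilbertAt_of_tendsto_truncatedHilbert (hf : Integrable f)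
    (hL : Tendsto (truncatedHilbert f x) (𝓝[>] 0) (𝓝 L)) : HasAbelHilbertAt f L x := by
  have hmix (t : ℝ) (ht : 0 < t) :=
    integrableOn_and_integral_abelKernel_mul_truncatedHilbert hf x ht
  obtain ⟨M, hM⟩ := exists_forall_pos_abs_le_of_tendsto (integral_nonneg fun y => abs_nonneg (f y))
    (fun ε hε => abs_truncatedHilbert_le hf x hε) hL
  have hlim := tendsto_setIntegral_Ioi_mul_comp_mul (integrableOn_Ioi_abelKernel le_rfl) hM hL
    fun t ht => (hmix t ht).1.aestronglyMeasurable
  rw [integral_Ioi_zero_abelKernel, one_mul] at hlim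
  exact hlim.congr' (eventually_mem_nhdsWithin.mono fun t ht => (hmix t ht).2)

lemma setIntegral_closedBall_eq_two_mul_average (f : ℝ → ℝ) (x : ℝ) {ε : ℝ} (hε : 0 < ε) :
    ∫ y in closedBall x ε, f y = 2 * ε * ⨍ y in closedBall x ε, f y := by
  rw [setAverage_eq, Measure.real, Real.volume_closedBall, ENNReal.toReal_ofReal (by positivity),
    smul_eq_mul]
  field_simp

lemma abs_average_closedBall_le (hf : Integrable f) (x : ℝ) {ε : ℝ} (hε : 0 < ε) :
    |⨍ y in closedBall x ε, f y| ≤ (∫ y, |f y|) / ε := by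
  have hle : |∫ y in closedBall x ε, f y| ≤ ∫ y, |f y| :=
    abs_integral_le_integral_abs.trans
      (setIntegral_le_integral hf.abs (.of_forall fun y => abs_nonneg (f y)))
  rw [setIntegral_closedBall_eq_two_mul_average f x hε, abs_mul, abs_of_pos (by positivity)] at hle
  rw [le_div_iff₀ hε]
  nlinarith [abs_nonneg (⨍ y in closedBall x ε, f y)]

lemma integrableOn_and_integral_abelKernel_mul_average (hf : Integrable f) (x : ℝ) (ht : 0 < t) :
    IntegrableOn (fun v => abelKernel v * (2 * v) * ⨍ y in closedBall x (t * v), f y) (Ioi 0) ∧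
      ∫ v in Ioi 0, abelKernel v * (2 * v) * ⨍ y in closedBall x (t * v), f y =
        -(cauchyTransform f (x + t * I)).im := by
  have him : (x + t * I : ℂ).im ≠ 0 := by simpa using ht.ne'
  let A : Set (ℝ × ℝ) := {p | |x - p.2| ≤ t * p.1}
  have hA : MeasurableSet A := measurableSet_le (by fun_prop) (by fun_prop)
  have htail (y : ℝ) : ∫ v in {v | (v, y) ∈ A}, abelKernel v
      ∂volume.restrict (Ioi 0) = (1 + (|x - y| / t) ^ 2)⁻¹ := by
    have hset : {v | (v, y) ∈ A} = Ici (|x - y| / t) := by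
      ext v
      simp [A, div_le_iff₀ ht, mul_comm t]
    rw [hset, integral_Ici_abelKernel (by positivity)]
  have hkernel (y : ℝ) : f y * (1 + (|x - y| / t) ^ 2)⁻¹ =
      t * (f y * (t / ((x - y) ^ 2 + t ^ 2))) := by
    rw [inv_one_add_sq_abs_div ht]
    ring
  have hball (v : ℝ) (hv : v ∈ Ioi 0) :
      abelKernel v * ∫ y in {y | (v, y) ∈ A}, f y =
        t * (abelKernel v * (2 * v) * ⨍ y in closedBall x (t * v), f y) := by
    have hset : {y | (v, y) ∈ A} = closedBall x (t * v) := by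
      ext y
      simp [A, Real.dist_eq, abs_sub_comm]
    rw [hset, setIntegral_closedBall_eq_two_mul_average f x (mul_pos ht hv)]
    ring
  have hmix := integrable_and_integral_mul_setIntegral
    (integrableOn_Ioi_abelKernel le_rfl)
    ((ae_restrict_mem measurableSet_Ioi).mono fun v hv => abelKernel_nonneg (le_of_lt hv))
    hf.aestronglyMeasurable hA
    (by simpa [-mem_ofPred_eq, htail, hkernel] using
      (integrable_mul_poissonKernel hf him).const_mul t)
  rw [setIntegral_congr_fun measurableSet_Ioi hball] at hmix
  simp only [htail, hkernel, integral_const_mul] at hmix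
  refine ⟨?_, ?_⟩
  · refine ((integrableOn_congr_fun hball measurableSet_Ioi).1 hmix.1 |>.const_mul t⁻¹).congr
      (.of_forall fun v => ?_)
    exact inv_mul_cancel_left₀ ht.ne' _
  · simpa [im_cauchyTransform hf him] using mul_left_cancel₀ ht.ne' hmix.2

theorem ae_tendsto_im_cauchyTransform (hf : Integrable f) :
    ∀ᵐ x : ℝ, Tendsto (fun t : ℝ => (cauchyTransform f (x + t * I)).im) (𝓝[>] 0)
      (𝓝 (-(π * f x))) := by
  filter_upwards [IsUnifLocDoublingMeasure.ae_tendsto_average (μ := volume)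
    hf.locallyIntegrable 1] with x hx
  have hmix (t : ℝ) (ht : 0 < t) := integrableOn_and_integral_abelKernel_mul_average hf x ht
  have hL : Tendsto (fun ε => ⨍ y in closedBall x ε, f y) (𝓝[>] 0) (𝓝 (f x)) :=
    hx (fun _ => x) id tendsto_id (eventually_mem_nhdsWithin.mono fun ε (hε : 0 < ε) => by
      simpa using hε.le)
  obtain ⟨M, hM⟩ := exists_forall_pos_abs_le_of_tendsto (integral_nonneg fun y => abs_nonneg (f y))
    (fun ε hε => abs_average_closedBall_le hf x hε) hL
  have hlim := tendsto_setIntegral_Ioi_mul_comp_mul integrableOn_Ioi_abelKernel_mul hM hL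
    fun t ht => (hmix t ht).1.aestronglyMeasurable
  rw [integral_Ioi_abelKernel_mul] at hlim
  refine hlim.neg.congr' (eventually_mem_nhdsWithin.mono fun t ht => ?_)
  rw [(hmix t ht).2, neg_neg]

end AbelMeans

section Decay

variable {f : ℝ → ℝ}

lemma abs_im_mul_norm_div_sub_le (a : ℝ) {z : ℂ} (hz : z.im ≠ 0) (y : ℝ) :
    |z.im| * ‖(a : ℂ) / (z - y)‖ ≤
      (ball z.re √|z.im|).indicator (fun _ => |a|) y + √|z.im| * |a| := by
  have him : 0 < |z.im| := abs_pos.2 hz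
  by_cases hy : y ∈ ball z.re √|z.im|
  · have hle := norm_ofReal_div_sub_le a hz y
    rw [le_div_iff₀' him] at hle
    rw [indicator_of_mem hy]
    exact hle.trans (le_add_of_nonneg_right (by positivity))
  · rw [indicator_of_notMem hy, zero_add, norm_div, norm_real, Real.norm_eq_abs]
    have hfar : √|z.im| ≤ ‖z - y‖ := by
      rw [mem_ball, not_lt, Real.dist_eq, abs_sub_comm] at hy
      exact hy.trans (abs_re_sub_le_norm_sub_ofReal z y)
    calc |z.im| * (|a| / ‖z - y‖) ≤ |z.im| * (|a| / √|z.im|) := by gcongr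
      _ = |z.im| / √|z.im| * |a| := by ring
      _ = √|z.im| * |a| := by rw [Real.div_sqrt]

theorem tendsto_im_mul_cauchyTransform (hf : Integrable f) :
    Tendsto (fun z : ℂ => z.im * cauchyTransform f z) (comap im (𝓝[≠] 0)) (𝓝 0) := by
  have him : Tendsto im (comap im (𝓝[≠] 0)) (𝓝 0) :=
    tendsto_comap.mono_right nhdsWithin_le_nhds
  have hsqrt : Tendsto (fun z : ℂ => √|z.im|) (comap im (𝓝[≠] 0)) (𝓝 0) := by
    simpa using him.abs.sqrt
  have hball : Tendsto (fun z : ℂ => ∫ y in ball z.re √|z.im|, |f y|) (comap im (𝓝[≠] 0))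
      (𝓝 0) := by
    refine hf.abs.tendsto_setIntegral_nhds_zero ?_
    simpa [Function.comp_def] using ENNReal.tendsto_ofReal (hsqrt.const_mul 2)
  refine squeeze_zero_norm' ?_ (by simpa using hball.add (hsqrt.mul_const (∫ y, |f y|)))
  filter_upwards [tendsto_comap self_mem_nhdsWithin] with z (hz : z.im ≠ 0)
  rw [norm_mul, norm_real, Real.norm_eq_abs, ← integral_indicator measurableSet_ball,
    ← integral_const_mul, ← integral_add (hf.abs.indicator measurableSet_ball)
    (hf.abs.const_mul _)]
  calc |z.im| * ‖cauchyTransform f z‖ ≤ |z.im| * ∫ y, ‖(f y : ℂ) / (z - y)‖ := by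
        gcongr
        exact norm_integral_le_integral_norm _
    _ = ∫ y, |z.im| * ‖(f y : ℂ) / (z - y)‖ := (integral_const_mul _ _).symm
    _ ≤ _ := by
        refine integral_mono ((integrable_div_sub hf hz).norm.const_mul _)
          ((hf.abs.indicator measurableSet_ball).add (hf.abs.const_mul _)) fun y => ?_
        simpa [indicator] using abs_im_mul_norm_div_sub_le (f y) hz y

theorem tendsto_mul_cauchyTransform_atTop (hf : Integrable f) :
    Tendsto (fun t : ℝ => (t * I) * cauchyTransform f (t * I)) atTop (𝓝 (∫ y, f y : ℝ)) := by
  simp only [cauchyTransform, ← integral_const_mul]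
  rw [← integral_complex_ofReal]
  refine tendsto_integral_filter_of_dominated_convergence (fun y => |f y|)
    (.of_forall fun t => (aestronglyMeasurable_div_sub hf _).const_mul _) ?_ hf.abs ?_
  · filter_upwards [eventually_gt_atTop 0] with t ht
    refine .of_forall fun y => ?_
    have hle := norm_ofReal_div_sub_le (f y) (z := t * I) (by simpa using ht.ne') y
    rw [le_div_iff₀' (by simpa using ht.ne')] at hle
    simpa [abs_of_pos ht] using hle
  · refine .of_forall fun y => ?_
    have hsmall : Tendsto (fun t : ℝ => (y : ℂ) / (t * I - y)) atTop (𝓝 0) := by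
      refine squeeze_zero_norm' ?_ (tendsto_const_nhds.div_atTop tendsto_id : Tendsto
        (fun t => |y| / t) atTop (𝓝 0))
      filter_upwards [eventually_gt_atTop 0] with t ht
      simpa [abs_of_pos ht] using norm_ofReal_div_sub_le y (z := t * I) (by simpa using ht.ne') y
    have hlim := (hsmall.const_add 1).const_mul (f y : ℂ)
    rw [add_zero, mul_one] at hlim
    refine hlim.congr' ?_
    filter_upwards [eventually_gt_atTop 0] with t ht
    have hne := sub_ofReal_ne_zero (z := t * I) (by simpa using ht.ne') y
    field_simp
    ring

lemma div_sq_add_sq_eq {t : ℝ} (ht : t ≠ 0) (x : ℝ) :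
    t / (x ^ 2 + t ^ 2) = t⁻¹ * (1 + (x / t) ^ 2)⁻¹ := by
  have hne : x ^ 2 + t ^ 2 ≠ 0 := by positivity
  have hne' : t ^ 2 + x ^ 2 ≠ 0 := by positivity
  field_simp
  ring

lemma integrable_poissonKernel {t : ℝ} (ht : t ≠ 0) :
    Integrable fun x : ℝ => t / (x ^ 2 + t ^ 2) := by
  simp only [div_sq_add_sq_eq ht]
  exact (integrable_inv_one_add_sq.comp_div ht).const_mul _

lemma integral_poissonKernel {t : ℝ} (ht : 0 < t) : ∫ x : ℝ, t / (x ^ 2 + t ^ 2) = π := by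
  simp only [div_sq_add_sq_eq ht.ne']
  rw [integral_const_mul, Measure.integral_comp_div (fun x => (1 + x ^ 2)⁻¹) t,
    integral_univ_inv_one_add_sq, abs_of_pos ht, smul_eq_mul, inv_mul_cancel_left₀ ht.ne']

open scoped Convolution in
lemma neg_im_cauchyTransform_eq_convolution (hf : Integrable f) {t : ℝ} (ht : t ≠ 0) :
    (fun x : ℝ => -(cauchyTransform f (x + t * I)).im) =
      f ⋆[ContinuousLinearMap.mul ℝ ℝ, volume] fun x => t / (x ^ 2 + t ^ 2) := by
  ext x
  simp [im_cauchyTransform hf (z := x + t * I) (by simpa using ht), convolution_def]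

lemma integrable_neg_im_cauchyTransform (hf : Integrable f) {t : ℝ} (ht : t ≠ 0) :
    Integrable fun x : ℝ => -(cauchyTransform f (x + t * I)).im := by
  rw [neg_im_cauchyTransform_eq_convolution hf ht]
  exact hf.integrable_convolution _ (integrable_poissonKernel ht)

lemma integral_neg_im_cauchyTransform (hf : Integrable f) {t : ℝ} (ht : 0 < t) :
    ∫ x : ℝ, -(cauchyTransform f (x + t * I)).im = π * ∫ x, f x := by
  rw [neg_im_cauchyTransform_eq_convolution hf ht.ne',
    integral_convolution _ hf (integrable_poissonKernel ht.ne'), integral_poissonKernel ht]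
  exact mul_comm _ _

end Decay

/-- `Q` is holomorphic off the real axis, symmetric under conjugation, and `o(1 / (im z)²)` at the
axis, uniformly in the real part. Its values on the axis are normalised to be the limits from
outside it, with the junk value of `limUnder` where there is none, so that `AnalyticAt ℂ Q x`
says that `Q` continues analytically across `x`. -/
structure IsAxisTame (Q : ℂ → ℂ) : Prop where
  differentiableAt : ∀ z : ℂ, z.im ≠ 0 → DifferentiableAt ℂ Q z
  map_conj : ∀ z : ℂ, z.im ≠ 0 → Q (conj z) = conj (Q z)
  tendsto_im_sq_mul : Tendsto (fun z : ℂ => z.im ^ 2 * Q z) (comap im (𝓝[≠] 0)) (𝓝 0)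
  apply_ofReal : ∀ x : ℝ, Q x = limUnder (𝓝[{z | z.im ≠ 0}] (x : ℂ)) Q

section LocalEstimates

lemma tendsto_add_mul_I_nhdsWithin_im_ne_zero (x : ℝ) :
    Tendsto (fun t : ℝ => (x + t * I : ℂ)) (𝓝[>] 0) (𝓝[{z | z.im ≠ 0}] x) := by
  refine tendsto_nhdsWithin_iff.2 ⟨?_, ?_⟩
  · exact (Continuous.tendsto' (by fun_prop) 0 _ (by simp)).mono_left nhdsWithin_le_nhds
  · filter_upwards [self_mem_nhdsWithin] with t (ht : 0 < t)
    simpa using ht.ne'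

instance nhdsWithin_im_ne_zero_neBot (x : ℝ) : (𝓝[{z : ℂ | z.im ≠ 0}] (x : ℂ)).NeBot :=
  (tendsto_add_mul_I_nhdsWithin_im_ne_zero x).neBot

/-- A polynomial of modulus `4 * r ^ 2 * (im z) ^ 2` on the circle of centre `a` and radius `r`, so
that it tames `o(1 / (im z) ^ 2)` singularities at the two real points of that circle. -/
noncomputable def circleWeight (a r : ℝ) (z : ℂ) : ℂ := ((z - a) ^ 2 - (r : ℂ) ^ 2) ^ 2

lemma differentiable_circleWeight (a r : ℝ) : Differentiable ℂ (circleWeight a r) := by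
  unfold circleWeight
  fun_prop

lemma norm_circleWeight_of_mem_sphere {a r : ℝ} {z : ℂ} (hz : z ∈ sphere (a : ℂ) r) :
    ‖circleWeight a r z‖ = 4 * r ^ 2 * z.im ^ 2 := by
  have hcircle : (z.re - a) ^ 2 + z.im ^ 2 = r ^ 2 := by
    rw [← mem_sphere_iff_norm.1 hz, Complex.sq_norm, normSq_apply]
    simp [sq]
  have hre : ((z - a) ^ 2 - (r : ℂ) ^ 2).re = (z.re - a) ^ 2 - z.im ^ 2 - r ^ 2 := by simp [sq]
  have him : ((z - a) ^ 2 - (r : ℂ) ^ 2).im = 2 * (z.re - a) * z.im := by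
    simp [sq]
    ring
  rw [circleWeight, norm_pow, Complex.sq_norm, normSq_apply, hre, him, ← hcircle]
  ring

lemma circleWeight_eq_zero_of_mem_sphere {a r : ℝ} {z : ℂ} (hz : z ∈ sphere (a : ℂ) r)
    (hz0 : z.im = 0) : circleWeight a r z = 0 := by
  rw [← norm_eq_zero, norm_circleWeight_of_mem_sphere hz, hz0]
  simp

lemma pow_four_le_norm_circleWeight_re (r : ℝ) (w : ℂ) : r ^ 4 ≤ ‖circleWeight w.re r w‖ := by
  have hreal : circleWeight w.re r w = (((w.im ^ 2 + r ^ 2) ^ 2 : ℝ) : ℂ) := by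
    rw [circleWeight, show w - w.re = w.im * I by apply Complex.ext <;> simp, mul_pow, I_sq]
    push_cast
    ring
  rw [hreal, norm_real, Real.norm_eq_abs, abs_of_nonneg (by positivity)]
  calc r ^ 4 = (r ^ 2) ^ 2 := by ring
    _ ≤ (w.im ^ 2 + r ^ 2) ^ 2 := by gcongr; exact le_add_of_nonneg_left (sq_nonneg _)

lemma im_le_of_forall_mem_frontier_im_le {U : Set ℂ} {f : ℂ → ℂ} {C : ℝ}
    (hU : Bornology.IsBounded U) (hf : DiffContOnCl ℂ f U) (hC : ∀ z ∈ frontier U, (f z).im ≤ C)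
    {z : ℂ} (hz : z ∈ closure U) : (f z).im ≤ C := by
  have hnorm (w : ℂ) : ‖cexp (-I * f w)‖ = Real.exp (f w).im := by simp [norm_exp]
  have hdiff : DiffContOnCl ℂ (fun w => cexp (-I * f w)) U :=
    differentiable_exp.comp_diffContOnCl (hf.const_smul (-I))
  have hmax := norm_le_of_forall_mem_frontier_norm_le hU hdiff (C := Real.exp C)
    (fun w hw => (hnorm w).trans_le (Real.exp_le_exp.2 (hC w hw))) hz
  rwa [hnorm, Real.exp_le_exp] at hmax

namespace IsAxisTame

variable {Q : ℂ → ℂ} {r W : ℝ}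

lemma analyticAt_of_eventually_eq (h : IsAxisTame Q) {x : ℝ} {φ : ℂ → ℂ} (hφ : AnalyticAt ℂ φ x)
    (heq : ∀ᶠ z in 𝓝 (x : ℂ), z.im ≠ 0 → Q z = φ z) : AnalyticAt ℂ Q x := by
  refine hφ.congr ?_
  filter_upwards [heq.eventually_nhds, hφ.eventually_analyticAt] with z hz hφz
  by_cases him : z.im = 0
  · obtain ⟨y, rfl⟩ : ∃ y : ℝ, (y : ℂ) = z := ⟨z.re, Complex.ext rfl (by simp [him])⟩
    rw [h.apply_ofReal]
    refine (Tendsto.limUnder_eq ((hφz.continuousAt.tendsto.mono_left nhdsWithin_le_nhds).congr'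
      ?_)).symm
    filter_upwards [nhdsWithin_le_nhds hz, self_mem_nhdsWithin] with w hw hw' using (hw hw').symm
  · exact (hz.self_of_nhds him).symm

lemma differentiableAt_of_analyticAt_re (h : IsAxisTame Q) {z : ℂ}
    (hz : AnalyticAt ℂ Q (z.re : ℂ)) : DifferentiableAt ℂ Q z := by
  by_cases him : z.im = 0
  · rw [show z = z.re from Complex.ext rfl (by simp [him])]
    exact hz.differentiableAt
  · exact h.differentiableAt z him

lemma im_apply_ofReal (h : IsAxisTame Q) {x : ℝ} (hx : AnalyticAt ℂ Q x) : (Q x).im = 0 := by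
  have hline := (tendsto_add_mul_I_nhdsWithin_im_ne_zero x).mono_right nhdsWithin_le_nhds
  have hupper := (continuous_conj.tendsto _).comp (hx.continuousAt.tendsto.comp hline)
  have hlower := hx.continuousAt.tendsto.comp
    (by simpa [Function.comp_def] using (continuous_conj.tendsto _).comp hline)
  refine conj_eq_iff_im.1 (tendsto_nhds_unique hupper (hlower.congr' ?_))
  filter_upwards [self_mem_nhdsWithin] with t (ht : 0 < t)
  simpa using h.map_conj (x + t * I) (by simpa using ht.ne')

lemma exists_im_sq_mul_norm_le (h : IsAxisTame Q) {ε : ℝ} (hε : 0 < ε) :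
    ∃ δ > 0, ∀ z : ℂ, z.im ≠ 0 → |z.im| ≤ δ → z.im ^ 2 * ‖Q z‖ ≤ ε := by
  have hev := (tendsto_zero_iff_norm_tendsto_zero.1 h.tendsto_im_sq_mul).eventually_lt_const hε
  rw [eventually_comap, eventually_nhdsWithin_iff] at hev
  obtain ⟨δ, hδ, hball⟩ := nhds_basis_closedBall.mem_iff.1 hev
  refine ⟨δ, hδ, fun z hz hzδ => ?_⟩
  simpa using (hball (by simpa using hzδ) hz z rfl).le

lemma norm_circleWeight_mul_le (h : IsAxisTame Q) (hr : 0 < r) {c : ℝ}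
    (hreg : ∀ y : ℝ, |y - c| ≤ r → AnalyticAt ℂ Q y)
    (hW : ∀ z : ℂ, z.im ≠ 0 → |z.im| ≤ r → z.im ^ 2 * ‖Q z‖ ≤ W) {w : ℂ}
    (hw : w ∈ closedBall (c : ℂ) r) : ‖circleWeight c r w * Q w‖ ≤ 4 * r ^ 2 * W := by
  have hW0 : 0 ≤ W :=
    le_trans (by positivity) (hW (r * I) (by simpa using hr.ne') (by simp [abs_of_pos hr]))
  rw [← closure_ball _ hr.ne'] at hw
  refine norm_le_of_forall_mem_frontier_norm_le (f := fun z => circleWeight c r z * Q z)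
    isBounded_ball (DifferentiableOn.diffContOnCl fun z hz => ?_) (fun z hz => ?_) hw
  · rw [closure_ball _ hr.ne'] at hz
    exact ((differentiable_circleWeight c r z).mul (h.differentiableAt_of_analyticAt_re
      (hreg _ ((abs_re_sub_le_norm_sub_ofReal z c).trans
        (mem_closedBall_iff_norm.1 hz))))).differentiableWithinAt
  · rw [frontier_ball _ hr.ne'] at hz
    rw [norm_mul, norm_circleWeight_of_mem_sphere hz, mul_assoc]
    rcases eq_or_ne z.im 0 with him | him
    · simpa [him] using by positivity
    · gcongr
      exact hW z him ((abs_im_le_norm_sub_ofReal z c).trans_eq (mem_sphere_iff_norm.1 hz))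

lemma norm_le_of_im_sq_mul_norm_le (h : IsAxisTame Q) (hr : 0 < r) {w : ℂ}
    (hreg : ∀ y : ℝ, |y - w.re| ≤ r → AnalyticAt ℂ Q y)
    (hW : ∀ z : ℂ, z.im ≠ 0 → |z.im| ≤ r → z.im ^ 2 * ‖Q z‖ ≤ W) (hw : |w.im| ≤ r) :
    ‖Q w‖ ≤ 4 * W / r ^ 2 := by
  have hw_mem : w ∈ closedBall (w.re : ℂ) r := by
    rw [mem_closedBall_iff_norm, show w - w.re = w.im * I by apply Complex.ext <;> simp]
    simpa using hw
  have hmax := h.norm_circleWeight_mul_le hr hreg hW hw_mem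
  rw [norm_mul] at hmax
  rw [le_div_iff₀ (by positivity)]
  refine le_of_mul_le_mul_left ?_ (pow_pos hr 2)
  calc r ^ 2 * (‖Q w‖ * r ^ 2) = r ^ 4 * ‖Q w‖ := by ring
    _ ≤ ‖circleWeight w.re r w‖ * ‖Q w‖ := by gcongr; exact pow_four_le_norm_circleWeight_re r w
    _ ≤ r ^ 2 * (4 * W) := hmax.trans_eq (by ring)

variable {x d τ : ℝ}

lemma norm_sub_apply_ofReal_le (h : IsAxisTame Q) (hd : 0 < d)
    (hreg : ∀ y : ℝ, |y - x| < d → AnalyticAt ℂ Q y)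
    (hW : ∀ z : ℂ, z.im ≠ 0 → |z.im| ≤ d → z.im ^ 2 * ‖Q z‖ ≤ W) {w : ℂ} (hw : ‖w - x‖ < d / 2) :
    ‖Q w - Q x‖ ≤ 64 * W / d ^ 3 * ‖w - x‖ := by
  have hball : ∀ z ∈ ball (x : ℂ) (d / 2), ‖Q z‖ ≤ 16 * W / d ^ 2 := by
    intro z hz
    rw [mem_ball_iff_norm] at hz
    have hre := abs_re_sub_le_norm_sub_ofReal z x
    have him := abs_im_le_norm_sub_ofReal z x
    refine (h.norm_le_of_im_sq_mul_norm_le (half_pos hd) (fun y hy => hreg y ?_)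
      (fun v hv hv' => hW v hv (by linarith)) (by linarith)).trans_eq (by field_simp; ring)
    linarith [abs_sub_le y z.re x]
  have hdiff : DifferentiableOn ℂ Q (ball (x : ℂ) (d / 2)) := fun z hz =>
    (h.differentiableAt_of_analyticAt_re (hreg _ ((abs_re_sub_le_norm_sub_ofReal z x).trans_lt
      (by linarith [mem_ball_iff_norm.1 hz])))).differentiableWithinAt
  have hmaps : MapsTo Q (ball (x : ℂ) (d / 2)) (closedBall (Q x) (32 * W / d ^ 2)) := by
    intro z hz
    rw [mem_closedBall_iff_norm]
    calc ‖Q z - Q x‖ ≤ ‖Q z‖ + ‖Q x‖ := norm_sub_le _ _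
      _ ≤ 16 * W / d ^ 2 + 16 * W / d ^ 2 :=
          add_le_add (hball z hz) (hball x (mem_ball_self (half_pos hd)))
      _ = 32 * W / d ^ 2 := by ring
  have hschwarz := dist_le_div_mul_dist_of_mapsTo_ball hdiff hmaps (mem_ball_iff_norm.2 hw)
  rw [dist_eq_norm, dist_eq_norm] at hschwarz
  refine hschwarz.trans_eq ?_
  field_simp
  ring

lemma abs_im_le_div_cube (h : IsAxisTame Q) {δ : ℝ} (hd : 0 < d) (hdδ : d ≤ δ) (hτ : 0 < τ)
    (hτδ : τ ≤ δ) (hreg : ∀ y : ℝ, |y - x| < d → AnalyticAt ℂ Q y)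
    (hW : ∀ z : ℂ, z.im ≠ 0 → |z.im| ≤ δ → z.im ^ 2 * ‖Q z‖ ≤ W) :
    |(Q (x + τ * I)).im| ≤ 125 * W * τ / (d + τ) ^ 3 := by
  have hW_point : τ ^ 2 * ‖Q (x + τ * I)‖ ≤ W := by
    simpa using hW (x + τ * I) (by simpa using hτ.ne') (by simpa [abs_of_pos hτ] using hτδ)
  have hW0 : 0 ≤ W := le_trans (by positivity) hW_point
  rcases le_or_gt d (4 * τ) with hle | hgt
  · have hbound : |(Q (x + τ * I)).im| ≤ W / τ ^ 2 :=
      (abs_im_le_norm _).trans (by rwa [le_div_iff₀' (by positivity)])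
    refine hbound.trans ?_
    rw [div_le_div_iff₀ (by positivity) (by positivity)]
    calc W * (d + τ) ^ 3 ≤ W * (5 * τ) ^ 3 := by gcongr; linarith
      _ = 125 * W * τ * τ ^ 2 := by ring
  · have hbound : |(Q (x + τ * I)).im| ≤ 64 * W / d ^ 3 * τ := by
      have hsub := h.norm_sub_apply_ofReal_le hd hreg (fun z hz hzd => hW z hz (hzd.trans hdδ))
        (w := x + τ * I) (by simp [abs_of_pos hτ]; linarith)
      have him := abs_im_le_norm (Q (x + τ * I) - Q x)
      rw [sub_im, h.im_apply_ofReal (hreg x (by simpa using hd)), sub_zero] at him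
      simpa [abs_of_pos hτ] using him.trans hsub
    refine hbound.trans ?_
    rw [div_mul_eq_mul_div, div_le_div_iff₀ (by positivity) (by positivity)]
    calc 64 * W * τ * (d + τ) ^ 3 ≤ 64 * W * τ * (5 / 4 * d) ^ 3 := by gcongr; linarith
      _ = 125 * W * τ * d ^ 3 := by ring

end IsAxisTame

end LocalEstimates

section Gaps

/-- The negated imaginary part of `z⁻²` at `z = p + q * I`. In the first quadrant it is a
nonnegative harmonic function that is unbounded only at the corner, which makes it the
Phragmén–Lindelöf barrier at an endpoint of an interval. -/
noncomputable def cornerBarrier (p q : ℝ) : ℝ := 2 * p * q / (p ^ 2 + q ^ 2) ^ 2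

lemma im_inv_sq (z : ℂ) : ((z ^ 2)⁻¹).im = -cornerBarrier z.re z.im := by
  have hnum : (z ^ 2).im = 2 * z.re * z.im := by
    rw [sq, mul_im]
    ring
  have hden : normSq (z ^ 2) = (z.re ^ 2 + z.im ^ 2) ^ 2 := by
    rw [map_pow, normSq_apply, ← sq, ← sq]
  rw [inv_im, hnum, hden, cornerBarrier, neg_div]

lemma cornerBarrier_nonneg {p q : ℝ} (hp : 0 ≤ p) (hq : 0 ≤ q) : 0 ≤ cornerBarrier p q := by
  unfold cornerBarrier
  positivity

lemma cornerBarrier_le (p : ℝ) {q : ℝ} (hq : 0 < q) : cornerBarrier p q ≤ 1 / q ^ 2 := by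
  calc cornerBarrier p q ≤ (p ^ 2 + q ^ 2) / (p ^ 2 + q ^ 2) ^ 2 := by
        unfold cornerBarrier
        gcongr
        exact two_mul_le_add_sq p q
    _ = 1 / (p ^ 2 + q ^ 2) := by field_simp
    _ ≤ 1 / q ^ 2 := by
        gcongr
        exact le_add_of_nonneg_left (sq_nonneg p)

lemma div_cube_le_two_mul_cornerBarrier {p q : ℝ} (hq : 0 < q) (hqp : q ≤ p) :
    q / p ^ 3 ≤ 2 * cornerBarrier p q := by
  have hp : 0 < p := hq.trans_le hqp
  calc q / p ^ 3 = 2 * (2 * p * q / (p ^ 2 + p ^ 2) ^ 2) := by field_simp; ring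
    _ ≤ 2 * cornerBarrier p q := by
        unfold cornerBarrier
        gcongr

namespace IsAxisTame

variable {Q M : ℂ → ℂ} {α β ε s : ℝ}

lemma exists_abs_im_le_cornerBarrier (h : IsAxisTame Q)
    (hreg : ∀ y : ℝ, y ∈ Ioo α β → AnalyticAt ℂ Q y) (hε : 0 < ε) :
    ∃ τ₀ > 0, ∀ τ : ℝ, τ ∈ Ioo 0 τ₀ → ∀ x : ℝ, x ∈ Ioo α β → |(Q (x + τ * I)).im| ≤
      ε + 250 * ε * (cornerBarrier (x - α + τ) τ + cornerBarrier (β - x + τ) τ) := by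
  obtain ⟨δ, hδ, hW⟩ := h.exists_im_sq_mul_norm_le hε
  refine ⟨min δ (δ ^ 3 / 125), by positivity, fun τ ⟨hτ, hτ₀⟩ x ⟨hαx, hxβ⟩ => ?_⟩
  obtain ⟨hτδ, hτδ'⟩ := lt_min_iff.1 hτ₀
  have hleft : 0 ≤ cornerBarrier (x - α + τ) τ := cornerBarrier_nonneg (by linarith) hτ.le
  have hright : 0 ≤ cornerBarrier (β - x + τ) τ := cornerBarrier_nonneg (by linarith) hτ.le
  have hcube (d : ℝ) (hd : 0 < d) (hdδ : d ≤ δ) (hdα : d ≤ x - α) (hdβ : d ≤ β - x) :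
      |(Q (x + τ * I)).im| ≤ 125 * ε * τ / (d + τ) ^ 3 :=
    h.abs_im_le_div_cube hd hdδ hτ hτδ.le (fun y hy => hreg y (by
      rw [abs_lt] at hy
      exact ⟨by linarith, by linarith⟩)) hW
  have hcorner (d : ℝ) (hd : 0 < d) :
      125 * ε * τ / (d + τ) ^ 3 ≤ 250 * ε * cornerBarrier (d + τ) τ := by
    have hle := div_cube_le_two_mul_cornerBarrier (p := d + τ) hτ (by linarith)
    calc 125 * ε * τ / (d + τ) ^ 3 = 125 * ε * (τ / (d + τ) ^ 3) := by ring
      _ ≤ 125 * ε * (2 * cornerBarrier (d + τ) τ) := by gcongr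
      _ = 250 * ε * cornerBarrier (d + τ) τ := by ring
  have hinner : 125 * ε * τ / (δ + τ) ^ 3 ≤ ε := by
    rw [div_le_iff₀ (by positivity)]
    calc 125 * ε * τ ≤ ε * δ ^ 3 := by nlinarith
      _ ≤ ε * (δ + τ) ^ 3 := by gcongr; linarith
  rw [mul_add]
  have hleft' := mul_nonneg (by positivity : 0 ≤ 250 * ε) hleft
  have hright' := mul_nonneg (by positivity : 0 ≤ 250 * ε) hright
  rcases le_total δ (min (x - α) (β - x)) with hmin | hmin
  · have := hcube δ hδ le_rfl (hmin.trans (min_le_left _ _)) (hmin.trans (min_le_right _ _))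
    linarith
  rcases le_total (x - α) (β - x) with hside | hside
  · rw [min_eq_left hside] at hmin
    linarith [hcube _ (sub_pos.2 hαx) hmin le_rfl hside, hcorner _ (sub_pos.2 hαx)]
  · rw [min_eq_right hside] at hmin
    linarith [hcube _ (sub_pos.2 hxβ) hmin hside le_rfl, hcorner _ (sub_pos.2 hxβ)]

/-- The comparison function of the Phragmén–Lindelöf argument over the interval `(α, β)`: its
imaginary part is that of `s * Q + M` minus the two corner barriers at height `im z`. -/
noncomputable def comparison (Q M : ℂ → ℂ) (s α β τ κ : ℝ) (z : ℂ) : ℂ :=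
  s * Q z + M z + κ * (((z - (α - τ : ℝ)) ^ 2)⁻¹ - ((z - (β + τ : ℝ)) ^ 2)⁻¹)

variable {τ κ : ℝ}

lemma im_comparison (z : ℂ) : (comparison Q M s α β τ κ z).im = s * (Q z).im + (M z).im -
    κ * (cornerBarrier (z.re - α + τ) z.im + cornerBarrier (β - z.re + τ) z.im) := by
  have hodd : cornerBarrier (z.re - (β + τ)) z.im = -cornerBarrier (β - z.re + τ) z.im := by
    rw [cornerBarrier, cornerBarrier, ← neg_div]
    congr 1 <;> ring
  simp only [comparison, add_im, sub_im, im_ofReal_mul, im_inv_sq, sub_re, ofReal_re, ofReal_im,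
    sub_zero, hodd]
  rw [show z.re - (α - τ) = z.re - α + τ by ring]
  ring

lemma differentiableAt_comparison (h : IsAxisTame Q) {z : ℂ} (hz : 0 < z.im)
    (hM : DifferentiableAt ℂ M z) : DifferentiableAt ℂ (comparison Q M s α β τ κ) z := by
  have hbarrier (c : ℝ) : DifferentiableAt ℂ (fun w : ℂ => ((w - c) ^ 2)⁻¹) z :=
    DifferentiableAt.fun_inv (by fun_prop) (pow_ne_zero 2 (sub_ofReal_ne_zero hz.ne' c))
  exact (((h.differentiableAt z hz.ne').const_mul _).add hM).add
    (((hbarrier _).sub (hbarrier _)).const_mul _)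

lemma im_comparison_le_of_mem_frontier {τ : ℝ} (hτ : τ ∈ Ioo (0 : ℝ) 1) (hε : 0 < ε) (hs : |s| ≤ 1)
    (hM : ∀ z : ℂ, 0 < z.im → (M z).im ≤ 0)
    (hside : ∀ z ∈ ({α, β} : Set ℝ) ×ℂ Ioc 0 1, |(Q z).im| ≤ -(M z).im)
    (htop : ∀ z ∈ Icc α β ×ℂ {1}, |(Q z).im| ≤ -(M z).im)
    (hbottom : ∀ x : ℝ, x ∈ Ioo α β → |(Q (x + τ * I)).im| ≤
      ε + κ * (cornerBarrier (x - α + τ) τ + cornerBarrier (β - x + τ) τ)) (hκ : 0 ≤ κ)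
    (hαβ : α < β) {z : ℂ} (hz : z ∈ frontier (Ioo α β ×ℂ Ioo τ 1)) :
    (comparison Q M s α β τ κ z).im ≤ ε := by
  have hmem : z.re ∈ Icc α β ∧ z.im ∈ Icc τ 1 := by
    have := frontier_subset_closure hz
    rwa [closure_reProdIm, closure_Ioo hαβ.ne, closure_Ioo hτ.2.ne] at this
  obtain ⟨⟨hα, hβ⟩, hτz, hz1⟩ := hmem
  have hpos : 0 < z.im := hτ.1.trans_le hτz
  have hbarrier : 0 ≤ κ * (cornerBarrier (z.re - α + τ) z.im +
      cornerBarrier (β - z.re + τ) z.im) :=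
    mul_nonneg hκ (add_nonneg (cornerBarrier_nonneg (by linarith [hτ.1]) hpos.le)
      (cornerBarrier_nonneg (by linarith [hτ.1]) hpos.le))
  have hsQ : s * (Q z).im ≤ |(Q z).im| := (le_abs_self _).trans
    (by rw [abs_mul]; exact mul_le_of_le_one_left (abs_nonneg _) hs)
  rw [im_comparison]
  suffices hcases : |(Q z).im| ≤ -(M z).im ∨ |(Q z).im| ≤ ε + κ *
      (cornerBarrier (z.re - α + τ) z.im + cornerBarrier (β - z.re + τ) z.im) by
    rcases hcases with hle | hle
    · linarith
    · linarith [hM z hpos]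
  by_cases hz_side : z.re ∈ ({α, β} : Set ℝ)
  · exact .inl (hside z ⟨hz_side, hpos, hz1⟩)
  by_cases hz_top : z.im = 1
  · exact .inl (htop z ⟨⟨hα, hβ⟩, hz_top⟩)
  have hz_bottom : z.im = τ := by
    rw [frontier_reProdIm, frontier_Ioo hαβ, frontier_Ioo hτ.2] at hz
    rcases hz with hz | hz
    · exact hz.2.resolve_right hz_top
    · exact absurd hz.1 hz_side
  simp only [mem_insert_iff, mem_singleton_iff, not_or] at hz_side
  have hle := hbottom z.re ⟨hα.lt_of_ne' hz_side.1, hβ.lt_of_ne hz_side.2⟩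
  rw [← hz_bottom, re_add_im] at hle
  exact .inr (hz_bottom ▸ hle)

lemma mul_im_le_neg_im_add (h : IsAxisTame Q) (hreg : ∀ y : ℝ, y ∈ Ioo α β → AnalyticAt ℂ Q y)
    (hMd : ∀ z : ℂ, 0 < z.im → DifferentiableAt ℂ M z) (hM : ∀ z : ℂ, 0 < z.im → (M z).im ≤ 0)
    (hside : ∀ z ∈ ({α, β} : Set ℝ) ×ℂ Ioc 0 1, |(Q z).im| ≤ -(M z).im)
    (htop : ∀ z ∈ Icc α β ×ℂ {1}, |(Q z).im| ≤ -(M z).im) (hs : |s| ≤ 1) (hε : 0 < ε) {w : ℂ}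
    (hw : w ∈ Ioo α β ×ℂ Ioo 0 1) :
    s * (Q w).im ≤ -(M w).im + ε * (1 + 500 / w.im ^ 2) := by
  obtain ⟨hre, him_pos, him_lt⟩ := hw
  have hαβ : α < β := hre.1.trans hre.2
  obtain ⟨τ₀, hτ₀, hbottom⟩ := h.exists_abs_im_le_cornerBarrier hreg hε
  obtain ⟨τ, hτ, hτ'⟩ := exists_between (lt_min hτ₀ him_pos)
  obtain ⟨hττ₀, hτw⟩ := lt_min_iff.1 hτ'
  have hτ1 : τ < 1 := hτw.trans him_lt
  have hdiff : DiffContOnCl ℂ (comparison Q M s α β τ (250 * ε)) (Ioo α β ×ℂ Ioo τ 1) := by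
    refine DifferentiableOn.diffContOnCl fun z hz => ?_
    rw [closure_reProdIm, closure_Ioo hαβ.ne, closure_Ioo hτ1.ne] at hz
    have hz0 : 0 < z.im := hτ.trans_le hz.2.1
    exact (h.differentiableAt_comparison hz0 (hMd z hz0)).differentiableWithinAt
  have hmax := im_le_of_forall_mem_frontier_im_le ((isBounded_Ioo α β).reProdIm (isBounded_Ioo τ 1))
    hdiff (fun z hz => im_comparison_le_of_mem_frontier ⟨hτ, hτ1⟩ hε hs hM hside htop
      (hbottom τ ⟨hτ, hττ₀⟩) (by positivity) hαβ hz)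
    (subset_closure (⟨hre, hτw, him_lt⟩ : w ∈ Ioo α β ×ℂ Ioo τ 1))
  rw [im_comparison] at hmax
  have hbarrier : 250 * ε * (cornerBarrier (w.re - α + τ) w.im +
      cornerBarrier (β - w.re + τ) w.im) ≤ 250 * ε * (1 / w.im ^ 2 + 1 / w.im ^ 2) := by
    gcongr <;> exact cornerBarrier_le _ him_pos
  calc s * (Q w).im ≤ -(M w).im + (ε + 250 * ε * (1 / w.im ^ 2 + 1 / w.im ^ 2)) := by linarith
    _ = -(M w).im + ε * (1 + 500 / w.im ^ 2) := by ring

theorem abs_im_le_neg_im_of_gap (h : IsAxisTame Q)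
    (hreg : ∀ y : ℝ, y ∈ Ioo α β → AnalyticAt ℂ Q y)
    (hMd : ∀ z : ℂ, 0 < z.im → DifferentiableAt ℂ M z) (hM : ∀ z : ℂ, 0 < z.im → (M z).im ≤ 0)
    (hside : ∀ z ∈ ({α, β} : Set ℝ) ×ℂ Ioc 0 1, |(Q z).im| ≤ -(M z).im)
    (htop : ∀ z ∈ Icc α β ×ℂ {1}, |(Q z).im| ≤ -(M z).im) {w : ℂ}
    (hw : w ∈ Ioo α β ×ℂ Ioo 0 1) : |(Q w).im| ≤ -(M w).im := by
  have hpos : 0 < 1 + 500 / w.im ^ 2 := by positivity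
  have hsigned (s : ℝ) (hs : |s| ≤ 1) : s * (Q w).im ≤ -(M w).im := by
    refine le_of_forall_pos_le_add fun ε hε => ?_
    have hle := h.mul_im_le_neg_im_add hreg hMd hM hside htop hs (div_pos hε hpos) hw
    rwa [div_mul_cancel₀ _ hpos.ne'] at hle
  exact abs_le'.2 ⟨by simpa using hsigned 1 (by simp), by simpa using hsigned (-1) (by simp)⟩

end IsAxisTame

end Gaps

section Continuation

variable {f φ ψ : ℂ → ℂ} {a r τ : ℝ} {w : ℂ}

lemma exists_ball_between_halfDisc_halfPlane (a r : ℝ) (hτ : 0 < τ) :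
    ∃ (c : ℂ) (R : ℝ), {z : ℂ | ‖z - a‖ ≤ r ∧ 0 ≤ z.im} ⊆ ball c R ∧
      ball c R ⊆ {z : ℂ | -τ < z.im} := by
  let K := r ^ 2 / τ
  have hK0 : 0 ≤ K := by positivity
  refine ⟨a + K * I, K + τ, fun z ⟨hz, hz0⟩ => ?_, fun z hz => ?_⟩
  · have hz_sq : (z.re - a) ^ 2 + z.im ^ 2 ≤ r ^ 2 := by
      have := pow_le_pow_left₀ (norm_nonneg _) hz 2
      rw [Complex.sq_norm, normSq_apply] at this
      simpa [sq] using this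
    have hKτ : K * τ = r ^ 2 := div_mul_cancel₀ _ hτ.ne'
    rw [mem_ball_iff_norm]
    refine lt_of_pow_lt_pow_left₀ 2 (by positivity) ?_
    rw [Complex.sq_norm, normSq_apply]
    simp only [sub_re, add_re, ofReal_re, mul_re, I_re, mul_zero, ofReal_im, I_im, sub_im, add_im,
      mul_im, mul_one, sub_self, add_zero, zero_add]
    nlinarith [mul_nonneg hK0 hz0]
  · have him := (abs_im_le_norm (z - (a + K * I))).trans_lt (mem_ball_iff_norm.1 hz)
    simp only [sub_im, add_im, ofReal_im, mul_im, ofReal_re, I_im, mul_one, I_re, mul_zero,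
      add_zero, zero_add] at him
    rw [mem_ofPred_eq]
    linarith [(abs_lt.1 him).1]

lemma integral_upper_arc (hr : 0 ≤ r) (hτ : 0 < τ) (hf : DifferentiableOn ℂ f {z | -τ < z.im}) :
    ∫ θ in (0)..π, deriv (circleMap a r) θ * f (circleMap a r θ) =
      -∫ x in (a - r)..(a + r), f x := by
  obtain ⟨c, R, hhalf, hball⟩ := exists_ball_between_halfDisc_halfPlane a r hτ
  obtain ⟨F, hF⟩ := (hf.mono hball).isExactOn_ball
  have hpath {γ : ℝ → ℂ} {s e : ℝ} (hγ : Differentiable ℝ γ) (hγ' : Continuous (deriv γ))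
      (hmem : ∀ u ∈ uIcc s e, ‖γ u - a‖ ≤ r ∧ 0 ≤ (γ u).im) :
      ∫ u in s..e, deriv γ u * f (γ u) = F (γ e) - F (γ s) := by
    refine intervalIntegral.integral_eq_sub_of_hasDerivAt (f := F ∘ γ) (fun u hu => ?_)
      (ContinuousOn.intervalIntegrable (hγ'.continuousOn.mul (hf.continuousOn.comp
        hγ.continuous.continuousOn fun u hu => hball (hhalf (hmem u hu)))))
    simpa using (hF _ (hhalf (hmem u hu))).scomp u (hγ u).hasDerivAt
  have harc := hpath (γ := circleMap a r) (s := 0) (e := π) (differentiable_circleMap _ _)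
    (by simp only [funext (deriv_circleMap (a : ℂ) r)]; fun_prop) fun θ hθ => by
      rw [uIcc_of_le Real.pi_pos.le] at hθ
      have hsin := mul_nonneg hr (Real.sin_nonneg_of_mem_Icc hθ)
      simpa [circleMap, exp_im, abs_of_nonneg hr] using hsin
  have hone : deriv (fun x : ℝ => (x : ℂ)) = fun _ => 1 :=
    funext fun x => ofRealCLM.hasDerivAt.deriv
  have hdiam := hpath (γ := fun x : ℝ => (x : ℂ)) (s := a - r) (e := a + r)
    ofRealCLM.differentiable (hone ▸ continuous_const) fun x hx => by
      rw [uIcc_of_le (by linarith)] at hx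
      rw [← ofReal_sub, norm_real, Real.norm_eq_abs, abs_le]
      exact ⟨⟨by linarith [hx.1], by linarith [hx.2]⟩, by simp⟩
  simp only [hone, one_mul] at hdiam
  rw [harc, hdiam]
  simp [circleMap, sub_eq_add_neg]

/-- The half turn about `a` carries the lower arc to the upper one. -/
lemma integral_lower_arc (hr : 0 ≤ r) (hτ : 0 < τ) (hf : DifferentiableOn ℂ f {z | z.im < τ}) :
    ∫ θ in π..(2 * π), deriv (circleMap a r) θ * f (circleMap a r θ) =
      ∫ x in (a - r)..(a + r), f x := by
  have hturn (θ : ℝ) : circleMap a r (θ + π) = 2 * a - circleMap a r θ := by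
    simp [circleMap, add_mul, exp_add]
    ring
  have hderiv (θ : ℝ) : deriv (circleMap a r) (θ + π) = -deriv (circleMap a r) θ := by
    simp [circleMap, add_mul, exp_add]
  have hf' : DifferentiableOn ℂ (fun z => f (2 * a - z)) {z | -τ < z.im} :=
    hf.comp (by fun_prop) fun z (hz : -τ < z.im) => by simpa using neg_lt.1 hz
  have hshift := intervalIntegral.integral_comp_add_right (a := 0) (b := π)
    (fun θ => deriv (circleMap a r) θ * f (circleMap a r θ)) π
  have hreal := intervalIntegral.integral_comp_sub_left (a := a - r) (b := a + r)
    (fun x : ℝ => f x) (2 * a)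
  rw [zero_add, ← two_mul] at hshift
  rw [← hshift]
  simp only [hturn, hderiv, neg_mul, intervalIntegral.integral_neg]
  rw [integral_upper_arc hr hτ hf', neg_neg]
  push_cast at hreal
  rw [hreal]
  congr 1 <;> ring

lemma exists_differentiableOn_eq_inv_sub_mul {U : Set ℂ} (hU : IsOpen U)
    (hφ : DifferentiableOn ℂ φ U) {c : ℂ} (hc : w ∈ U → φ w = c) :
    ∃ q, DifferentiableOn ℂ q U ∧ ∀ z ≠ w, q z = (z - w)⁻¹ * (φ z - c) := by
  by_cases hw : w ∈ U
  · refine ⟨dslope φ w, (differentiableOn_dslope (hU.mem_nhds hw)).2 hφ, fun z hz => ?_⟩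
    rw [dslope_of_ne _ hz, slope_def_field, hc hw, div_eq_inv_mul]
  · refine ⟨_, fun z hz => ?_, fun z _ => rfl⟩
    exact ((differentiableWithinAt_id.sub_const w).inv
      (sub_ne_zero.2 (ne_of_mem_of_not_mem hz hw))).mul ((hφ z hz).sub_const c)

/-- The function that is `φ` above the real axis and `ψ` on and below it. -/
noncomputable def splice (φ ψ : ℂ → ℂ) (z : ℂ) : ℂ := if 0 < z.im then φ z else ψ z

lemma splice_circleMap_of_mem_upper (hr : 0 < r) {θ : ℝ} (hθ : θ ∈ Ioo 0 π) :
    splice φ ψ (circleMap a r θ) = φ (circleMap a r θ) := by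
  have him : 0 < (circleMap (a : ℂ) r θ).im := by
    simpa [circleMap, exp_im] using mul_pos hr (Real.sin_pos_of_mem_Ioo hθ)
  exact if_pos him

lemma splice_circleMap_of_mem_lower (hr : 0 < r) {θ : ℝ} (hθ : θ ∈ Ioo π (2 * π)) :
    splice φ ψ (circleMap a r θ) = ψ (circleMap a r θ) := by
  have hsin := Real.sin_pos_of_mem_Ioo (x := θ - π) ⟨by linarith [hθ.1], by linarith [hθ.2]⟩
  rw [Real.sin_sub_pi] at hsin
  have him : (circleMap (a : ℂ) r θ).im < 0 := by
    simpa [circleMap, exp_im] using mul_neg_of_pos_of_neg hr (neg_pos.1 hsin)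
  exact if_neg him.not_gt

lemma intervalIntegrable_splice_upper (hr : 0 < r) (hφ : ContinuousOn φ {z | 0 ≤ z.im}) :
    IntervalIntegrable (fun θ => splice φ ψ (circleMap a r θ)) volume 0 π := by
  refine IntervalIntegrable.congr_uIoo (f := fun θ => φ (circleMap a r θ))
    (ContinuousOn.intervalIntegrable (hφ.comp (by fun_prop) fun θ hθ => ?_)) fun θ hθ => ?_
  · rw [uIcc_of_le Real.pi_pos.le] at hθ
    simpa [circleMap, exp_im] using mul_nonneg hr.le (Real.sin_nonneg_of_mem_Icc hθ)
  · rw [uIoo_of_le Real.pi_pos.le] at hθ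
    exact (splice_circleMap_of_mem_upper hr hθ).symm

lemma intervalIntegrable_splice_lower (hr : 0 < r) (hψ : ContinuousOn ψ {z | z.im ≤ 0}) :
    IntervalIntegrable (fun θ => splice φ ψ (circleMap a r θ)) volume π (2 * π) := by
  have hπ : π ≤ 2 * π := by linarith [Real.pi_pos]
  refine IntervalIntegrable.congr_uIoo (f := fun θ => ψ (circleMap a r θ))
    (ContinuousOn.intervalIntegrable (hψ.comp (by fun_prop) fun θ hθ => ?_)) fun θ hθ => ?_
  · rw [uIcc_of_le hπ] at hθ
    have hsin := Real.sin_nonneg_of_mem_Icc (x := θ - π) ⟨by linarith [hθ.1], by linarith [hθ.2]⟩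
    rw [Real.sin_sub_pi] at hsin
    simpa [circleMap, exp_im] using mul_nonpos_of_nonneg_of_nonpos hr.le (neg_nonneg.1 hsin)
  · rw [uIoo_of_le hπ] at hθ
    exact (splice_circleMap_of_mem_lower hr hθ).symm

lemma circleIntegrable_splice (hr : 0 < r) (hφ : ContinuousOn φ {z | 0 ≤ z.im})
    (hψ : ContinuousOn ψ {z | z.im ≤ 0}) : CircleIntegrable (splice φ ψ) a r :=
  (intervalIntegrable_splice_upper hr hφ).trans (intervalIntegrable_splice_lower hr hψ)

lemma circleIntegral_splice (hr : 0 < r) (hτ : 0 < τ) (hφ : DifferentiableOn ℂ φ {z | -τ < z.im})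
    (hψ : DifferentiableOn ℂ ψ {z | z.im < τ}) :
    ∮ z in C(a, r), splice φ ψ z = ∫ x in (a - r)..(a + r), (ψ x - φ x) := by
  have hφc : ContinuousOn φ {z | 0 ≤ z.im} := hφ.continuousOn.mono
    fun z (hz : 0 ≤ z.im) => (neg_lt_zero.2 hτ).trans_le hz
  have hψc : ContinuousOn ψ {z | z.im ≤ 0} := hψ.continuousOn.mono
    fun z (hz : z.im ≤ 0) => hz.trans_lt hτ
  have hderiv : Continuous (deriv (circleMap (a : ℂ) r)) := by
    simp only [funext (deriv_circleMap (a : ℂ) r)]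
    fun_prop
  have hπ : π ≤ 2 * π := by linarith [Real.pi_pos]
  simp only [circleIntegral, smul_eq_mul]
  rw [← intervalIntegral.integral_add_adjacent_intervals
    ((intervalIntegrable_splice_upper hr hφc).continuousOn_mul hderiv.continuousOn)
    ((intervalIntegrable_splice_lower hr hψc).continuousOn_mul hderiv.continuousOn),
    intervalIntegral.integral_sub]
  · rw [sub_eq_neg_add, ← integral_upper_arc hr.le hτ hφ, ← integral_lower_arc hr.le hτ hψ]
    congr 1
    · exact intervalIntegral.integral_congr_Ioo_of_le Real.pi_pos.le fun θ hθ => by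
        simp only [splice_circleMap_of_mem_upper hr hθ]
    · exact intervalIntegral.integral_congr_Ioo_of_le hπ fun θ hθ => by
        simp only [splice_circleMap_of_mem_lower hr hθ]
  · exact ContinuousOn.intervalIntegrable (hψc.comp (by fun_prop) fun x _ => by simp)
  · exact ContinuousOn.intervalIntegrable (hφc.comp (by fun_prop) fun x _ => by simp)

lemma continuousOn_sphere_inv_sub (hw : w ∈ ball (a : ℂ) r) :
    ContinuousOn (fun z => (z - w)⁻¹) (sphere (a : ℂ) r) :=
  ContinuousOn.inv₀ (by fun_prop) fun z hz =>
    sub_ne_zero.2 fun h => (mem_ball.1 (h ▸ hw)).ne (mem_sphere.1 hz)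

theorem circleIntegral_inv_sub_smul_splice (hr : 0 < r) (hτ : 0 < τ)
    (hφ : DifferentiableOn ℂ φ {z | -τ < z.im}) (hψ : DifferentiableOn ℂ ψ {z | z.im < τ})
    (hw : w ∈ ball (a : ℂ) r) (hwτ : τ ≤ |w.im|) :
    ∮ z in C(a, r), (z - w)⁻¹ • splice φ ψ z = 2 * π * I * splice φ ψ w +
      ∫ x in (a - r)..(a + r), (x - w)⁻¹ * (ψ x - φ x) := by
  have hw0 : w.im ≠ 0 := abs_pos.1 (hτ.trans_le hwτ)
  set c := splice φ ψ w with hc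
  obtain ⟨qφ, hqφ, hqφ_eq⟩ := exists_differentiableOn_eq_inv_sub_mul (w := w) (c := c)
    (isOpen_lt continuous_const continuous_im) hφ fun (hwU : -τ < w.im) => by
      rw [hc, splice, if_pos (by rcases le_abs.1 hwτ with h | h <;> linarith)]
  obtain ⟨qψ, hqψ, hqψ_eq⟩ := exists_differentiableOn_eq_inv_sub_mul (w := w) (c := c)
    (isOpen_lt continuous_im continuous_const) hψ fun (hwU : w.im < τ) => by
      rw [hc, splice, if_neg (by rcases le_abs.1 hwτ with h | h <;> linarith)]
  have hT : CircleIntegrable (splice φ ψ) a r := circleIntegrable_splice hr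
    (hφ.continuousOn.mono fun z (hz : 0 ≤ z.im) => (neg_lt_zero.2 hτ).trans_le hz)
    (hψ.continuousOn.mono fun z (hz : z.im ≤ 0) => hz.trans_lt hτ)
  have hinv {g : ℂ → ℂ} (hg : CircleIntegrable g a r) :
      CircleIntegrable (fun z => (z - w)⁻¹ • g z) a r :=
    IntervalIntegrable.continuousOn_mul hg ((continuousOn_sphere_inv_sub hw).comp
      (by fun_prop) fun θ _ => circleMap_mem_sphere _ hr.le θ)
  have hquot : ∮ z in C(a, r), splice qφ qψ z =
      (∮ z in C(a, r), (z - w)⁻¹ • splice φ ψ z) - 2 * π * I * c := by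
    rw [← smul_eq_mul (2 * π * I), ← circleIntegral.integral_sub_inv_of_mem_ball hw,
      ← circleIntegral.integral_smul_const, ← circleIntegral.integral_sub (hinv hT)
      (hinv (circleIntegrable_const c _ _))]
    refine circleIntegral.integral_congr hr.le fun z hz => ?_
    have hzw : z ≠ w := fun h => (mem_ball.1 (h ▸ hw)).ne (mem_sphere.1 hz)
    simp only [splice, hqφ_eq z hzw, hqψ_eq z hzw, smul_eq_mul]
    split_ifs <;> ring
  have hdiam (x : ℝ) : qψ x - qφ x = (x - w)⁻¹ * (ψ x - φ x) := by
    have hxw : (x : ℂ) ≠ w := fun h => hw0 (by simp [← h])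
    rw [hqψ_eq x hxw, hqφ_eq x hxw]
    ring
  rw [← sub_eq_iff_eq_add', ← hquot, circleIntegral_splice hr hτ hqφ hqψ]
  simp only [hdiam]

lemma norm_circleWeight_ofReal_le {a r x : ℝ} (hx : x ∈ Icc (a - r) (a + r)) :
    ‖circleWeight a r x‖ ≤ r ^ 4 := by
  have hreal : circleWeight a r x = (((r ^ 2 - (x - a) ^ 2) ^ 2 : ℝ) : ℂ) := by
    rw [circleWeight]
    push_cast
    ring
  have hsq : (x - a) ^ 2 ≤ r ^ 2 :=
    sq_le_sq' (by linarith [hx.1]) (by linarith [hx.2])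
  rw [hreal, norm_real, Real.norm_eq_abs, abs_of_nonneg (sq_nonneg _)]
  calc (r ^ 2 - (x - a) ^ 2) ^ 2 ≤ (r ^ 2) ^ 2 :=
        pow_le_pow_left₀ (sub_nonneg.2 hsq) (sub_le_self _ (sq_nonneg _)) 2
    _ = r ^ 4 := by ring

/-- `Q`, pulled back from distance `t` beyond the real axis on either side and weighted by
`circleWeight`, so that it is holomorphic up to the axis from both sides when `0 < t`. -/
noncomputable def shiftedWeight (Q : ℂ → ℂ) (a r t : ℝ) : ℂ → ℂ :=
  splice (fun z => circleWeight a r z * Q (z + t * I)) fun z => circleWeight a r z * Q (z - t * I)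

namespace IsAxisTame

variable {Q : ℂ → ℂ} {a r δ t : ℝ} {w : ℂ}

lemma differentiableOn_weight_mul_comp_add (h : IsAxisTame Q) (a r t : ℝ) :
    DifferentiableOn ℂ (fun z => circleWeight a r z * Q (z + t * I)) {z | -t < z.im} :=
  fun z (hz : -t < z.im) => ((differentiable_circleWeight a r z).mul
    ((h.differentiableAt (z + t * I) (by simpa using (neg_lt_iff_pos_add.1 hz).ne')).comp
      (f := fun z : ℂ => z + t * I) z (by fun_prop))).differentiableWithinAt

lemma differentiableOn_weight_mul_comp_sub (h : IsAxisTame Q) (a r t : ℝ) :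
    DifferentiableOn ℂ (fun z => circleWeight a r z * Q (z - t * I)) {z | z.im < t} :=
  fun z (hz : z.im < t) => ((differentiable_circleWeight a r z).mul
    ((h.differentiableAt (z - t * I) (by simpa using (sub_neg.2 hz).ne)).comp
      (f := fun z : ℂ => z - t * I) z (by fun_prop))).differentiableWithinAt

lemma circleIntegral_inv_sub_smul_shiftedWeight (h : IsAxisTame Q) (hr : 0 < r) (ht : 0 < t)
    (hw : w ∈ ball (a : ℂ) r) (htw : t ≤ |w.im|) :
    ∮ z in C(a, r), (z - w)⁻¹ • shiftedWeight Q a r t z = 2 * π * I * shiftedWeight Q a r t w -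
      ∫ x in (a - r)..(a + r), (x - w)⁻¹ * (circleWeight a r x *
        (2 * I * (Q (x + t * I)).im)) := by
  rw [shiftedWeight, circleIntegral_inv_sub_smul_splice hr ht
    (h.differentiableOn_weight_mul_comp_add a r t)
    (h.differentiableOn_weight_mul_comp_sub a r t) hw htw, sub_eq_add_neg (2 * π * I * _),
    ← intervalIntegral.integral_neg]
  congr 2 with x
  have hconj : Q (x - t * I) = conj (Q (x + t * I)) := by
    rw [← h.map_conj _ (by simpa using ht.ne')]
    simp [sub_eq_add_neg]
  have him := sub_conj (Q (x + t * I))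
  push_cast at him
  rw [hconj, ← mul_sub, ← neg_sub (Q (x + t * I)), him]
  ring

lemma norm_shiftedWeight_le (hδ : ∀ z : ℂ, z.im ≠ 0 → |z.im| ≤ δ → z.im ^ 2 * ‖Q z‖ ≤ 1)
    (ht : 0 ≤ t) (hrt : r + t ≤ δ) {z : ℂ} (hz : z ∈ sphere (a : ℂ) r) :
    ‖shiftedWeight Q a r t z‖ ≤ 4 * r ^ 2 := by
  have him : |z.im| ≤ r := mem_sphere_iff_norm.1 hz ▸ abs_im_le_norm_sub_ofReal z a
  suffices hv : ∀ v : ℂ, |v.im| = |z.im| + t → ‖circleWeight a r z * Q v‖ ≤ 4 * r ^ 2 by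
    rw [shiftedWeight, splice]
    split_ifs with hpos
    · refine hv _ ?_
      simp [abs_of_pos hpos, abs_of_nonneg (add_nonneg hpos.le ht)]
    · refine hv _ ?_
      rw [not_lt] at hpos
      simp [abs_of_nonpos hpos, abs_of_nonpos (sub_nonpos.2 (hpos.trans ht))]
      ring
  intro v hv
  rw [norm_mul, norm_circleWeight_of_mem_sphere hz, mul_assoc]
  refine mul_le_of_le_one_right (by positivity) ?_
  rcases eq_or_ne z.im 0 with hz0 | hz0
  · simp [hz0]
  have hzv : z.im ^ 2 ≤ v.im ^ 2 := sq_le_sq.2 (by linarith)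
  calc z.im ^ 2 * ‖Q v‖ ≤ v.im ^ 2 * ‖Q v‖ := by gcongr
    _ ≤ 1 := hδ v (abs_pos.1 (by linarith [abs_pos.2 hz0])) (by linarith)

lemma tendsto_shiftedWeight (h : IsAxisTame Q) {z : ℂ} (hz : z.im ≠ 0) :
    Tendsto (fun t => shiftedWeight Q a r t z) (𝓝[>] 0) (𝓝 (circleWeight a r z * Q z)) := by
  have hQ {γ : ℝ → ℂ} (hγ : Continuous γ) (hγ0 : γ 0 = z) :
      Tendsto (fun t => circleWeight a r z * Q (γ t)) (𝓝[>] 0) (𝓝 (circleWeight a r z * Q z)) :=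
    ((h.differentiableAt z hz).continuousAt.tendsto.comp
      ((hγ.tendsto' 0 z hγ0).mono_left nhdsWithin_le_nhds)).const_mul _
  simp only [shiftedWeight, splice]
  split_ifs
  · exact hQ (γ := fun t => z + t * I) (by fun_prop) (by simp)
  · exact hQ (γ := fun t => z - t * I) (by fun_prop) (by simp)

lemma continuousOn_sphere_weight_mul (h : IsAxisTame Q) (a r : ℝ) :
    ContinuousOn (fun z => circleWeight a r z * Q z) (sphere (a : ℂ) r) := by
  intro z hz
  rcases eq_or_ne z.im 0 with hz0 | hz0
  swap
  · exact ((differentiable_circleWeight a r z).continuousAt.mul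
      (h.differentiableAt z hz0).continuousAt).continuousWithinAt
  rw [ContinuousWithinAt, circleWeight_eq_zero_of_mem_sphere hz hz0, zero_mul]
  refine Metric.tendsto_nhds.2 fun ε hε => ?_
  obtain ⟨δ, hδ, hsmall⟩ := h.exists_im_sq_mul_norm_le (ε := ε / (4 * r ^ 2 + 1)) (by positivity)
  have hclose : ∀ᶠ v : ℂ in 𝓝[sphere (a : ℂ) r] z, |v.im| < δ :=
    nhdsWithin_le_nhds (continuous_im.abs.continuousAt.eventually_lt_const
      (by simpa [hz0] using hδ))
  filter_upwards [hclose, self_mem_nhdsWithin] with v hvδ hv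
  rw [dist_zero_right, norm_mul]
  rcases eq_or_ne v.im 0 with hv0 | hv0
  · simpa [circleWeight_eq_zero_of_mem_sphere hv hv0] using hε
  rw [norm_circleWeight_of_mem_sphere hv, mul_assoc]
  calc 4 * r ^ 2 * (v.im ^ 2 * ‖Q v‖) ≤ 4 * r ^ 2 * (ε / (4 * r ^ 2 + 1)) := by
        gcongr
        exact hsmall v hv0 hvδ.le
    _ < ε := by
        rw [mul_div_assoc', div_lt_iff₀ (by positivity)]
        linarith

lemma tendsto_shiftedWeight_of_mem_sphere (h : IsAxisTame Q) {z : ℂ}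
    (hz : z ∈ sphere (a : ℂ) r) :
    Tendsto (fun t => shiftedWeight Q a r t z) (𝓝[>] 0) (𝓝 (circleWeight a r z * Q z)) := by
  by_cases hz0 : z.im = 0
  · simp [shiftedWeight, splice, circleWeight_eq_zero_of_mem_sphere hz hz0]
  · exact h.tendsto_shiftedWeight hz0

lemma tendsto_circleIntegral_shiftedWeight (h : IsAxisTame Q)
    (hδ : ∀ z : ℂ, z.im ≠ 0 → |z.im| ≤ δ → z.im ^ 2 * ‖Q z‖ ≤ 1) (hr : 0 < r) (hrδ : r < δ)
    (hw : w ∈ ball (a : ℂ) r) :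
    Tendsto (fun t => ∮ z in C(a, r), (z - w)⁻¹ • shiftedWeight Q a r t z) (𝓝[>] 0)
      (𝓝 (∮ z in C(a, r), (z - w)⁻¹ • (circleWeight a r z * Q z))) := by
  have hderiv : Continuous (deriv (circleMap (a : ℂ) r)) := by
    simp only [funext (deriv_circleMap (a : ℂ) r)]
    fun_prop
  have hmem (θ : ℝ) : circleMap (a : ℂ) r θ ∈ sphere (a : ℂ) r := circleMap_mem_sphere _ hr.le θ
  have hinv : Continuous fun θ => (circleMap (a : ℂ) r θ - w)⁻¹ :=
    (continuousOn_sphere_inv_sub hw).comp_continuous (continuous_circleMap _ _) hmem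
  have hsmall : ∀ᶠ t : ℝ in 𝓝[>] 0, 0 < t ∧ r + t ≤ δ := by
    filter_upwards [Ioo_mem_nhdsGT (sub_pos.2 hrδ)] with t ht using ⟨ht.1, by linarith [ht.2]⟩
  refine intervalIntegral.tendsto_integral_filter_of_dominated_convergence
    (fun θ => ‖deriv (circleMap (a : ℂ) r) θ‖ * (‖(circleMap (a : ℂ) r θ - w)⁻¹‖ * (4 * r ^ 2)))
    ?_ ?_ (Continuous.intervalIntegrable (by fun_prop) _ _) (.of_forall fun θ _ =>
      ((h.tendsto_shiftedWeight_of_mem_sphere (hmem θ)).const_smul _).const_smul _)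
  · filter_upwards [hsmall] with t ht
    have hT : CircleIntegrable (shiftedWeight Q a r t) a r := circleIntegrable_splice hr
      ((h.differentiableOn_weight_mul_comp_add a r t).continuousOn.mono
        fun z (hz : 0 ≤ z.im) => (neg_lt_zero.2 ht.1).trans_le hz)
      ((h.differentiableOn_weight_mul_comp_sub a r t).continuousOn.mono
        fun z (hz : z.im ≤ 0) => hz.trans_lt ht.1)
    exact hderiv.aestronglyMeasurable.smul (hinv.aestronglyMeasurable.smul
      hT.def'.aestronglyMeasurable)
  · filter_upwards [hsmall] with t ht
    refine .of_forall fun θ _ => ?_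
    rw [norm_smul, norm_smul]
    gcongr
    exact norm_shiftedWeight_le hδ ht.1.le ht.2 (hmem θ)

lemma continuous_comp_add_mul_I (h : IsAxisTame Q) (ht : t ≠ 0) :
    Continuous fun x : ℝ => Q (x + t * I) :=
  continuous_iff_continuousAt.2 fun x => ContinuousAt.comp (f := fun x : ℝ => (x : ℂ) + t * I)
    (h.differentiableAt _ (by simpa using ht)).continuousAt (by fun_prop)

lemma tendsto_integral_jump (h : IsAxisTame Q) (hr : 0 < r) (hw : w.im ≠ 0)
    (hL : Tendsto (fun t : ℝ => ∫ x in (a - r)..(a + r), |(Q (x + t * I)).im|) (𝓝[>] 0) (𝓝 0)) :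
    Tendsto (fun t : ℝ => ∫ x in (a - r)..(a + r), (x - w)⁻¹ * (circleWeight a r x *
      (2 * I * (Q (x + t * I)).im))) (𝓝[>] 0) (𝓝 0) := by
  refine squeeze_zero_norm' ?_ (by simpa using hL.const_mul (|w.im|⁻¹ * (r ^ 4 * 2)))
  filter_upwards [self_mem_nhdsWithin] with t (ht : 0 < t)
  rw [← intervalIntegral.integral_const_mul]
  have hcont := continuous_im.comp (h.continuous_comp_add_mul_I ht.ne')
  refine intervalIntegral.norm_integral_le_of_norm_le (by linarith) (.of_forall fun x hx => ?_)
    (Continuous.intervalIntegrable (hcont.abs.const_mul _) _ _)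
  have hinv : ‖((x : ℂ) - w)⁻¹‖ ≤ |w.im|⁻¹ := by
    rw [norm_inv, norm_sub_rev]
    gcongr
    exact abs_im_le_norm_sub_ofReal w x
  have hweight := norm_circleWeight_ofReal_le (Ioc_subset_Icc_self hx)
  calc ‖((x : ℂ) - w)⁻¹ * (circleWeight a r x * (2 * I * (Q (x + t * I)).im))‖
      = ‖((x : ℂ) - w)⁻¹‖ * (‖circleWeight a r x‖ * (2 * |(Q (x + t * I)).im|)) := by simp
    _ ≤ |w.im|⁻¹ * (r ^ 4 * (2 * |(Q (x + t * I)).im|)) := by gcongr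
    _ = |w.im|⁻¹ * (r ^ 4 * 2) * |(Q (x + t * I)).im| := by ring

lemma circleIntegral_inv_sub_smul_weight_mul (h : IsAxisTame Q)
    (hδ : ∀ z : ℂ, z.im ≠ 0 → |z.im| ≤ δ → z.im ^ 2 * ‖Q z‖ ≤ 1) (hr : 0 < r) (hrδ : r < δ)
    (hL : Tendsto (fun t : ℝ => ∫ x in (a - r)..(a + r), |(Q (x + t * I)).im|) (𝓝[>] 0) (𝓝 0))
    (hw : w ∈ ball (a : ℂ) r) (hw0 : w.im ≠ 0) :
    ∮ z in C(a, r), (z - w)⁻¹ • (circleWeight a r z * Q z) =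
      2 * π * I * (circleWeight a r w * Q w) := by
  have hlim := ((h.tendsto_shiftedWeight hw0 (a := a) (r := r)).const_mul (2 * π * I)).sub
    (h.tendsto_integral_jump hr hw0 hL)
  rw [sub_zero] at hlim
  refine tendsto_nhds_unique (h.tendsto_circleIntegral_shiftedWeight hδ hr hrδ hw)
    (hlim.congr' ?_)
  filter_upwards [Ioo_mem_nhdsGT (abs_pos.2 hw0)] with t ht
  exact (h.circleIntegral_inv_sub_smul_shiftedWeight hr ht.1 hw ht.2.le).symm

lemma analyticAt_of_tendsto_integral_abs_im_of_lt (h : IsAxisTame Q)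
    (hδ : ∀ z : ℂ, z.im ≠ 0 → |z.im| ≤ δ → z.im ^ 2 * ‖Q z‖ ≤ 1) (hr : 0 < r) (hrδ : r < δ)
    (hL : Tendsto (fun t : ℝ => ∫ x in (a - r)..(a + r), |(Q (x + t * I)).im|) (𝓝[>] 0) (𝓝 0)) :
    AnalyticAt ℂ Q a := by
  lift r to NNReal using hr.le
  have hcircle : CircleIntegrable (fun z => circleWeight a r z * Q z) a r :=
    (h.continuousOn_sphere_weight_mul a r).circleIntegrable hr.le
  have hcauchy := (hasFPowerSeriesOn_cauchy_integral hcircle (mod_cast hr)).analyticAt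
  have hweight : circleWeight a r a ≠ 0 := by simp [circleWeight, hr.ne']
  refine h.analyticAt_of_eventually_eq
    (hcauchy.div ((differentiable_circleWeight a r).analyticAt _) hweight) ?_
  have hcont := (differentiable_circleWeight a r).continuous.continuousAt (x := (a : ℂ))
  filter_upwards [ball_mem_nhds (a : ℂ) hr, hcont.eventually_ne hweight] with z hz hne hz0
  have hπ : (2 * π * I : ℂ) ≠ 0 := two_pi_I_ne_zero
  rw [Pi.div_apply, eq_div_iff hne,
    h.circleIntegral_inv_sub_smul_weight_mul hδ hr hrδ hL hz hz0, smul_eq_mul,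
    inv_mul_cancel_left₀ hπ, mul_comm]

theorem analyticAt_of_tendsto_integral_abs_im (h : IsAxisTame Q) (hr : 0 < r)
    (hL : Tendsto (fun t : ℝ => ∫ x in (a - r)..(a + r), |(Q (x + t * I)).im|) (𝓝[>] 0) (𝓝 0)) :
    AnalyticAt ℂ Q a := by
  obtain ⟨δ, hδ, hsmall⟩ := h.exists_im_sq_mul_norm_le one_pos
  have hr' : 0 < min r (δ / 2) := by positivity
  refine h.analyticAt_of_tendsto_integral_abs_im_of_lt hsmall hr'
    ((min_le_right _ _).trans_lt (half_lt_self hδ)) (squeeze_zero' (.of_forall fun t =>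
      intervalIntegral.integral_nonneg (by linarith) fun x _ => abs_nonneg _) ?_ hL)
  filter_upwards [self_mem_nhdsWithin] with t (ht : 0 < t)
  have hle := min_le_left r (δ / 2)
  exact intervalIntegral.integral_mono_interval (by linarith) (by linarith) (by linarith)
    (.of_forall fun x => abs_nonneg _) (Continuous.intervalIntegrable
      (continuous_im.comp (h.continuous_comp_add_mul_I ht.ne')).abs _ _)

end IsAxisTame

end Continuation

section DominatedConvergence

/-- Dominated convergence in Pratt's form: the dominating functions may vary, as long as their
integrals converge to the integral of their limit. -/
lemma tendsto_integral_abs_of_le_of_tendsto {α ι : Type*} [MeasurableSpace α] {μ : Measure α}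
    {l : Filter ι} [l.IsCountablyGenerated] {u G : ι → α → ℝ} {g : α → ℝ}
    (hu_meas : ∀ᶠ i in l, AEStronglyMeasurable (u i) μ) (hG : ∀ᶠ i in l, Integrable (G i) μ)
    (hg : Integrable g μ) (hle : ∀ᶠ i in l, ∀ᵐ x ∂μ, |u i x| ≤ G i x)
    (hu : ∀ᵐ x ∂μ, Tendsto (u · x) l (𝓝 0)) (hGg : ∀ᵐ x ∂μ, Tendsto (G · x) l (𝓝 (g x)))
    (hGint : Tendsto (fun i => ∫ x, G i x ∂μ) l (𝓝 (∫ x, g x ∂μ))) :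
    Tendsto (fun i => ∫ x, |u i x| ∂μ) l (𝓝 0) := by
  have hmeas : ∀ᶠ i in l, AEStronglyMeasurable (fun x => min (G i x - |u i x|) |g x|) μ := by
    filter_upwards [hu_meas, hG] with i hui hGi
    exact (hGi.1.sub hui.norm).inf hg.1.norm
  have hbound : ∀ᶠ i in l, ∀ᵐ x ∂μ, ‖min (G i x - |u i x|) |g x|‖ ≤ |g x| := by
    filter_upwards [hle] with i hi
    filter_upwards [hi] with x hx
    rw [Real.norm_of_nonneg (le_min (sub_nonneg.2 hx) (abs_nonneg _))]
    exact min_le_right _ _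
  have hlower : Tendsto (fun i => ∫ x, min (G i x - |u i x|) |g x| ∂μ) l (𝓝 (∫ x, g x ∂μ)) := by
    refine tendsto_integral_filter_of_dominated_convergence _ hmeas hbound hg.abs ?_
    filter_upwards [hu, hGg] with x hux hGx
    simpa [min_eq_left (le_abs_self (g x))] using (hGx.sub hux.abs).min
      (tendsto_const_nhds (x := |g x|))
  have hdiff := hGint.sub hlower
  rw [sub_self] at hdiff
  refine squeeze_zero' (.of_forall fun i => integral_nonneg fun x => abs_nonneg _) ?_ hdiff
  filter_upwards [hu_meas, hG, hle, hmeas, hbound] with i hui hGi hi hmeasi hboundi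
  have hmin : Integrable (fun x => min (G i x - |u i x|) |g x|) μ := hg.abs.mono' hmeasi hboundi
  rw [← integral_sub hGi hmin]
  refine integral_mono_ae (hGi.mono' hui.norm (by simpa using hi)) (hGi.sub hmin)
    (.of_forall fun x => ?_)
  exact le_sub_comm.1 (min_le_left _ _)

variable {u : ℝ → ℝ → ℝ} {g : ℝ → ℝ} {s : Set ℝ} {D : ℝ}

lemma tendsto_setIntegral_abs_of_le_neg_im_cauchyTransform (hs : MeasurableSet s)
    (hs_fin : volume s ≠ ⊤) (hg : Integrable g) (hg_nonneg : 0 ≤ g)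
    (hu_meas : ∀ᶠ t in 𝓝[>] 0, AEStronglyMeasurable (u t))
    (hle : ∀ᶠ t : ℝ in 𝓝[>] 0, ∀ x ∈ s, |u t x| ≤ -(cauchyTransform g (x + t * I)).im + D)
    (hu : ∀ᵐ x, Tendsto (u · x) (𝓝[>] 0) (𝓝 0)) :
    Tendsto (fun t => ∫ x in s, |u t x|) (𝓝[>] 0) (𝓝 0) := by
  have hD : Integrable (s.indicator fun _ => D) :=
    (integrableOn_const hs_fin).integrable_indicator hs
  have hpos : ∀ᶠ t : ℝ in 𝓝[>] 0, 0 < t := self_mem_nhdsWithin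
  have hG : ∀ᶠ t : ℝ in 𝓝[>] 0, Integrable fun x : ℝ =>
      -(cauchyTransform g (x + t * I)).im + s.indicator (fun _ => D) x := by
    filter_upwards [hpos] with t ht using (integrable_neg_im_cauchyTransform hg ht.ne').add hD
  have hGint : Tendsto (fun t : ℝ => ∫ x : ℝ,
      (-(cauchyTransform g (x + t * I)).im + s.indicator (fun _ => D) x)) (𝓝[>] 0)
      (𝓝 (∫ x, (π * g x + s.indicator (fun _ => D) x))) := by
    refine tendsto_const_nhds.congr' ?_
    filter_upwards [hpos] with t ht
    rw [integral_add (hg.const_mul π) hD, integral_const_mul,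
      integral_add (integrable_neg_im_cauchyTransform hg ht.ne') hD,
      integral_neg_im_cauchyTransform hg ht]
  have hlim := tendsto_integral_abs_of_le_of_tendsto (u := fun t => s.indicator (u t))
    (hu_meas.mono fun t h => h.indicator hs) hG ((hg.const_mul π).add hD) ?_ ?_ ?_ hGint
  · have habs (t x : ℝ) : |s.indicator (u t) x| = s.indicator (fun x => |u t x|) x :=
      norm_indicator_eq_indicator_norm (u t) x
    simpa only [habs, integral_indicator hs] using hlim
  · filter_upwards [hle, hpos] with t hlet ht
    refine .of_forall fun x => ?_
    by_cases hx : x ∈ s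
    · simpa [hx] using hlet x hx
    · simpa [hx] using im_cauchyTransform_nonpos hg hg_nonneg (by simpa using ht)
  · filter_upwards [hu] with x hx
    by_cases hxs : x ∈ s <;> simp [hxs, hx]
  · filter_upwards [ae_tendsto_im_cauchyTransform hg] with x hx
    simpa using hx.neg.add_const (s.indicator (fun _ => D) x)

end DominatedConvergence

section SingularSet

lemma isClosed_setOf_not_analyticAt_ofReal (Q : ℂ → ℂ) : IsClosed {x : ℝ | ¬AnalyticAt ℂ Q x} :=
  ((isOpen_analyticAt ℂ Q).preimage continuous_ofReal).isClosed_compl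

lemma exists_inter_Icc_subset_of_subset_iUnion {S U : Set ℝ} {E : ℕ → Set ℝ} (hS : IsClosed S)
    (hU : IsOpen U) (hSU : (S ∩ U).Nonempty) (hE : ∀ n, IsClosed (E n)) (hcover : U ⊆ ⋃ n, E n) :
    ∃ a ∈ S, ∃ r > 0, ∃ n, S ∩ Icc (a - r) (a + r) ⊆ E n := by
  have : CompleteSpace S := hS.completeSpace_coe
  have hdense : Dense (⋃ n, interior ((↑) ⁻¹' (E n ∪ Uᶜ) : Set S)) := by
    refine dense_iUnion_interior_of_closed
      (fun n => ((hE n).union hU.isClosed_compl).preimage continuous_subtype_val)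
      (eq_univ_of_forall fun x => mem_iUnion.2 ?_)
    by_cases hx : (x : ℝ) ∈ U
    · exact (mem_iUnion.1 (hcover hx)).imp fun n hn => .inl hn
    · exact ⟨0, .inr hx⟩
  obtain ⟨s, hs, hsU⟩ := hSU
  obtain ⟨a, haU, ha⟩ :=
    hdense.inter_open_nonempty _ (hU.preimage continuous_subtype_val) ⟨⟨s, hs⟩, hsU⟩
  obtain ⟨n, hn⟩ := mem_iUnion.1 ha
  obtain ⟨V, hV, hVn⟩ := isOpen_induced_iff.1 (isOpen_interior (s := ((↑) ⁻¹' (E n ∪ Uᶜ) : Set S)))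
  have haV : (a : ℝ) ∈ V := by rwa [← hVn] at hn
  obtain ⟨r, hr, hball⟩ := nhds_basis_closedBall.mem_iff.1 ((hV.inter hU).mem_nhds ⟨haV, haU⟩)
  rw [Real.closedBall_eq_Icc] at hball
  refine ⟨a, a.2, r, hr, n, fun x ⟨hxS, hx⟩ => ?_⟩
  have hxV : (⟨x, hxS⟩ : S) ∈ interior ((↑) ⁻¹' (E n ∪ Uᶜ) : Set S) := hVn ▸ (hball hx).1
  exact (interior_subset hxV).resolve_right (not_not.2 (hball hx).2)

namespace IsAxisTame

variable {Q M : ℂ → ℂ} {g : ℝ → ℝ} {T : Set ℝ} {a r s α β : ℝ} {w : ℂ}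

lemma exists_abs_im_le_of_analyticAt (h : IsAxisTame Q) (hs : AnalyticAt ℂ Q s) :
    ∃ K, ∀ t ∈ Ioc (0 : ℝ) 1, |(Q (s + t * I)).im| ≤ K := by
  have hcont : ContinuousOn (fun t : ℝ => (Q (s + t * I)).im) (Icc 0 1) := fun t _ =>
    (continuous_im.continuousAt.comp (ContinuousAt.comp (f := fun t : ℝ => (s : ℂ) + t * I)
      (h.differentiableAt_of_analyticAt_re (by simpa using hs)).continuousAt
      (by fun_prop))).continuousWithinAt
  obtain ⟨K, hK⟩ := isCompact_Icc.exists_bound_of_continuousOn hcont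
  exact ⟨K, fun t ht => hK t (Ioc_subset_Icc_self ht)⟩

lemma abs_im_le_neg_im_of_isClosed (h : IsAxisTame Q) (hT : IsClosed T) (hα : α ∈ T) (hβ : β ∈ T)
    (hreg : ∀ y : ℝ, y ∈ Icc α β → y ∉ T → AnalyticAt ℂ Q y)
    (hMd : ∀ z : ℂ, 0 < z.im → DifferentiableAt ℂ M z) (hM : ∀ z : ℂ, 0 < z.im → (M z).im ≤ 0)
    (hside : ∀ z ∈ (T ∩ Icc α β) ×ℂ Ioc 0 1, |(Q z).im| ≤ -(M z).im)
    (htop : ∀ z ∈ Icc α β ×ℂ {1}, |(Q z).im| ≤ -(M z).im)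
    (hw : w ∈ Icc α β ×ℂ Ioo 0 1) : |(Q w).im| ≤ -(M w).im := by
  obtain ⟨hw_re, hw_im⟩ := hw
  by_cases hwT : w.re ∈ T
  · exact hside w ⟨⟨hwT, hw_re⟩, Ioo_subset_Ioc_self hw_im⟩
  obtain ⟨α', ⟨hα'T, hα'⟩, hα'_max⟩ := ((isCompact_Icc (a := α) (b := w.re)).inter_left
    hT).exists_isGreatest ⟨α, hα, left_mem_Icc.2 hw_re.1⟩
  obtain ⟨β', ⟨hβ'T, hβ'⟩, hβ'_min⟩ := ((isCompact_Icc (a := w.re) (b := β)).inter_left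
    hT).exists_isLeast ⟨β, hβ, right_mem_Icc.2 hw_re.2⟩
  have hα'w : α' < w.re := hα'.2.lt_of_ne fun heq => hwT (heq ▸ hα'T)
  have hwβ' : w.re < β' := hβ'.1.lt_of_ne fun heq => hwT (heq ▸ hβ'T)
  have hgap : ∀ y ∈ Ioo α' β', y ∉ T := fun y hy hyT => by
    rcases le_total y w.re with hyw | hwy
    · exact hy.1.not_ge (hα'_max ⟨hyT, hα'.1.trans hy.1.le, hyw⟩)
    · exact hy.2.not_ge (hβ'_min ⟨hyT, hwy, hy.2.le.trans hβ'.2⟩)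
  have hsub : Icc α' β' ⊆ Icc α β := Icc_subset_Icc hα'.1 hβ'.2
  refine h.abs_im_le_neg_im_of_gap
    (fun y hy => hreg y (hsub (Ioo_subset_Icc_self hy)) (hgap y hy)) hMd hM
    (fun z hz => hside z ⟨?_, hz.2⟩) (fun z hz => htop z ⟨hsub hz.1, hz.2⟩)
    ⟨⟨hα'w, hwβ'⟩, hw_im⟩
  have hends : {α', β'} ⊆ T ∩ Icc α β := insert_subset
    ⟨hα'T, hα'.1, hα'.2.trans hw_re.2⟩ (singleton_subset_iff.2 ⟨hβ'T, hw_re.1.trans hβ'.1, hβ'.2⟩)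
  exact hends hz.1

lemma exists_abs_im_le_neg_im_add_of_not_analyticAt (h : IsAxisTame Q) (hg : Integrable g)
    (hg_nonneg : 0 ≤ g) (hsing : ¬AnalyticAt ℂ Q s → ∀ t ∈ Ioc (0 : ℝ) 1,
      |(Q (s + t * I)).im| ≤ -(cauchyTransform g (s + t * I)).im) :
    ∃ K, ∀ t ∈ Ioc (0 : ℝ) 1,
      |(Q (s + t * I)).im| ≤ -(cauchyTransform g (s + t * I)).im + K := by
  by_cases hs : AnalyticAt ℂ Q s
  · obtain ⟨K, hK⟩ := h.exists_abs_im_le_of_analyticAt hs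
    refine ⟨K, fun t ht => (hK t ht).trans (le_add_of_nonneg_left (neg_nonneg.2 ?_))⟩
    exact im_cauchyTransform_nonpos hg hg_nonneg (by simpa using ht.1)
  · exact ⟨0, fun t ht => (hsing hs t ht).trans_eq (add_zero _).symm⟩

lemma exists_forall_Icc_abs_im_le_neg_im_add (h : IsAxisTame Q) (hg : Integrable g)
    (hg_nonneg : 0 ≤ g) (hαβ : α ≤ β)
    (hsing : ∀ s : ℝ, s ∈ Icc α β → ¬AnalyticAt ℂ Q s → ∀ t ∈ Ioc (0 : ℝ) 1,
      |(Q (s + t * I)).im| ≤ -(cauchyTransform g (s + t * I)).im) :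
    ∃ D, ∀ t ∈ Ioo (0 : ℝ) 1, ∀ x ∈ Icc α β,
      |(Q (x + t * I)).im| ≤ -(cauchyTransform g (x + t * I)).im + D := by
  have hg_im {z : ℂ} (hz : 0 < z.im) := im_cauchyTransform_nonpos hg hg_nonneg hz
  obtain ⟨Kα, hKα⟩ := h.exists_abs_im_le_neg_im_add_of_not_analyticAt hg hg_nonneg
    (hsing α (left_mem_Icc.2 hαβ))
  obtain ⟨Kβ, hKβ⟩ := h.exists_abs_im_le_neg_im_add_of_not_analyticAt hg hg_nonneg
    (hsing β (right_mem_Icc.2 hαβ))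
  obtain ⟨Ktop, hKtop⟩ := (isCompact_Icc (a := α) (b := β)).exists_bound_of_continuousOn
    (h.continuous_comp_add_mul_I one_ne_zero).continuousOn
  obtain ⟨D, hD⟩ := (Set.toFinite {0, Kα, Kβ, Ktop}).bddAbove
  simp only [upperBounds_insert, upperBounds_singleton, mem_inter_iff, mem_Ici] at hD
  obtain ⟨hD0, hαD, hβD, htopD⟩ := hD
  have hM_im (z : ℂ) : -(cauchyTransform g z - D * I).im = -(cauchyTransform g z).im + D := by
    simp [add_comm, sub_eq_add_neg]
  refine ⟨D, fun t ht x hx => hM_im (x + t * I) ▸ h.abs_im_le_neg_im_of_isClosed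
    (M := fun z => cauchyTransform g z - D * I)
    ((isClosed_setOf_not_analyticAt_ofReal Q).union (Set.toFinite {α, β}).isClosed)
    (.inr (.inl rfl)) (.inr (.inr rfl)) (fun y _ hy => not_not.1 fun hyQ => hy (.inl hyQ))
    (fun z hz => (differentiableAt_cauchyTransform hg hz.ne').sub_const _)
    (fun z hz => by simpa using (hg_im hz).trans hD0) ?_ ?_
    (by simpa [mem_reProdIm] using ⟨hx, ht⟩)⟩
  · rintro z ⟨⟨hzT, hz_re⟩, hz_im⟩
    rw [hM_im, ← re_add_im z]
    rcases hzT with hzQ | hzα | hzβ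
    · exact (hsing z.re hz_re hzQ z.im hz_im).trans (le_add_of_nonneg_right hD0)
    · exact (hzα ▸ hKα z.im hz_im).trans (by gcongr)
    · exact (mem_singleton_iff.1 hzβ ▸ hKβ z.im hz_im).trans (by gcongr)
  · rintro z ⟨hz_re, hz_im : z.im = 1⟩
    have htop := hKtop z.re hz_re
    rw [← hz_im, re_add_im] at htop
    linarith [hM_im z, abs_im_le_norm (Q z), hg_im (z := z) (hz_im ▸ one_pos)]

theorem analyticAt_of_abs_im_le_of_not_analyticAt (h : IsAxisTame Q) (hr : 0 < r)
    (hg : Integrable g) (hg_nonneg : 0 ≤ g)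
    (hsing : ∀ s : ℝ, s ∈ Icc (a - r) (a + r) → ¬AnalyticAt ℂ Q s → ∀ t ∈ Ioc (0 : ℝ) 1,
      |(Q (s + t * I)).im| ≤ -(cauchyTransform g (s + t * I)).im)
    (hlim : ∀ᵐ x : ℝ, Tendsto (fun t : ℝ => (Q (x + t * I)).im) (𝓝[>] 0) (𝓝 0)) :
    AnalyticAt ℂ Q a := by
  have hle : a - r ≤ a + r := by linarith
  obtain ⟨D, hD⟩ := h.exists_forall_Icc_abs_im_le_neg_im_add hg hg_nonneg hle hsing
  refine h.analyticAt_of_tendsto_integral_abs_im hr ?_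
  simp only [intervalIntegral.integral_of_le hle]
  refine tendsto_setIntegral_abs_of_le_neg_im_cauchyTransform measurableSet_Ioc
    measure_Ioc_lt_top.ne hg hg_nonneg ?_ ?_ hlim (D := D)
  · filter_upwards [self_mem_nhdsWithin] with t (ht : 0 < t)
    exact (continuous_im.comp (h.continuous_comp_add_mul_I ht.ne')).aestronglyMeasurable
  · filter_upwards [Ioo_mem_nhdsGT one_pos] with t ht x hx
    exact hD t ht x (Ioc_subset_Icc_self hx)

/-- Baire's theorem yields a piece of the singular set lying in a single `E n`, where the local
criterion applies. -/
theorem analyticAt_of_subset_iUnion (h : IsAxisTame Q) {U : Set ℝ} (hU : IsOpen U)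
    {E : ℕ → Set ℝ} (hE : ∀ n, IsClosed (E n)) (hcover : U ⊆ ⋃ n, E n) {g : ℕ → ℝ → ℝ}
    (hg : ∀ n, Integrable (g n)) (hg_nonneg : ∀ n, 0 ≤ g n)
    (hbound : ∀ n, ∀ s ∈ E n, ∀ t ∈ Ioc (0 : ℝ) 1,
      |(Q (s + t * I)).im| ≤ -(cauchyTransform (g n) (s + t * I)).im)
    (hlim : ∀ᵐ x : ℝ, Tendsto (fun t : ℝ => (Q (x + t * I)).im) (𝓝[>] 0) (𝓝 0)) (ha : a ∈ U) :
    AnalyticAt ℂ Q a := by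
  by_contra hsing
  obtain ⟨b, hb, r, hr, n, hn⟩ := exists_inter_Icc_subset_of_subset_iUnion
    (isClosed_setOf_not_analyticAt_ofReal Q) hU ⟨a, hsing, ha⟩ hE hcover
  exact hb (h.analyticAt_of_abs_im_le_of_not_analyticAt hr (hg n) (hg_nonneg n)
    (fun s hs hsQ => hbound n s (hn ⟨hsQ, hs⟩)) hlim)

end IsAxisTame

end SingularSet

section Rigidity

lemma analyticAt_dslope {f : ℂ → ℂ} {c : ℂ} (hf : AnalyticAt ℂ f c) :
    AnalyticAt ℂ (dslope f c) c :=
  hf.elim fun _ hp => ⟨_, hp.has_fpower_series_dslope_fslope⟩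

namespace IsAxisTame

variable {Q : ℂ → ℂ} {c : ℝ}

lemma tendsto_sub_sq_mul_of_eventually_analyticAt (h : IsAxisTame Q)
    (hreg : ∀ᶠ x : ℝ in 𝓝[≠] c, AnalyticAt ℂ Q x) :
    Tendsto (fun z => (z - c) ^ 2 * Q z) (𝓝 (c : ℂ)) (𝓝 0) := by
  refine Metric.tendsto_nhds_nhds.2 fun ε hε => ?_
  obtain ⟨δ, hδ, hsmall⟩ := h.exists_im_sq_mul_norm_le (ε := ε / 40) (by positivity)
  obtain ⟨η, hη, hball⟩ := Metric.nhdsWithin_basis_ball.mem_iff.1 hreg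
  refine ⟨min δ (η / 2), by positivity, fun w hw => ?_⟩
  rw [dist_eq_norm, lt_min_iff] at hw
  have hre := abs_re_sub_le_norm_sub_ofReal w c
  have him := abs_im_le_norm_sub_ofReal w c
  have hnorm : ‖w - c‖ ^ 2 = |w.re - c| ^ 2 + |w.im| ^ 2 := by
    rw [Complex.sq_norm, normSq_apply, sq_abs, sq_abs]
    simp [sq]
  suffices hr : ∃ r, |w.re - c| ≤ 2 * r ∧ |w.im| ≤ r ∧ r ^ 2 * ‖Q w‖ ≤ ε / 10 by
    obtain ⟨r, hr_re, hr_im, hrQ⟩ := hr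
    rw [dist_zero_right, norm_mul, norm_pow, hnorm]
    calc (|w.re - c| ^ 2 + |w.im| ^ 2) * ‖Q w‖ ≤ ((2 * r) ^ 2 + r ^ 2) * ‖Q w‖ := by gcongr
      _ = 5 * (r ^ 2 * ‖Q w‖) := by ring
      _ < ε := by linarith
  rcases le_or_gt |w.im| (|w.re - c| / 2) with hle | hgt
  · rcases (abs_nonneg (w.re - c)).eq_or_lt' with hre0 | hre0
    · exact ⟨0, by simp [hre0], by simpa [hre0] using hle, by simpa using by positivity⟩
    refine ⟨|w.re - c| / 2, by linarith, hle, ?_⟩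
    have hbound := h.norm_le_of_im_sq_mul_norm_le (half_pos hre0)
      (fun y hy => hball ⟨?_, ?_⟩) (fun z hz hz_im => hsmall z hz (by linarith [hw.1])) hle
    · rw [le_div_iff₀' (by positivity)] at hbound
      exact hbound.trans_eq (by ring)
    · rw [mem_ball, Real.dist_eq]
      linarith [abs_sub_le y w.re c]
    · rintro rfl
      rw [abs_sub_comm] at hy
      linarith
  · have hpos : 0 < |w.im| := lt_of_le_of_lt (by positivity) hgt
    refine ⟨|w.im|, by linarith, le_rfl, ?_⟩
    have := hsmall w (abs_pos.1 hpos) (him.trans hw.1.le)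
    rw [sq_abs]
    linarith

lemma analyticAt_sub_sq_mul_of_eventually_analyticAt (h : IsAxisTame Q)
    (hreg : ∀ᶠ x : ℝ in 𝓝[≠] c, AnalyticAt ℂ Q x) :
    AnalyticAt ℂ (fun z => (z - c) ^ 2 * Q z) c := by
  refine analyticAt_of_differentiable_on_punctured_nhds_of_continuousAt ?_
    (by simpa [ContinuousAt] using h.tendsto_sub_sq_mul_of_eventually_analyticAt hreg)
  rw [eventually_nhdsWithin_iff] at hreg
  filter_upwards [self_mem_nhdsWithin,
    nhdsWithin_le_nhds (continuous_re.tendsto' (c : ℂ) c (ofReal_re c) hreg)] with z hz hz_reg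
  refine DifferentiableAt.mul (by fun_prop) ?_
  by_cases hz_im : z.im = 0
  · exact h.differentiableAt_of_analyticAt_re
      (hz_reg fun hz_re => hz (Complex.ext hz_re (by simpa using hz_im)))
  · exact h.differentiableAt z hz_im

theorem analyticAt_of_tendsto_mul (h : IsAxisTame Q)
    (hreg : ∀ᶠ x : ℝ in 𝓝[≠] c, AnalyticAt ℂ Q x)
    (hlim : Tendsto (fun t : ℝ => t * Q (c + t * I)) (𝓝[>] 0) (𝓝 0)) : AnalyticAt ℂ Q c := by
  let P : ℂ → ℂ := fun z => (z - c) ^ 2 * Q z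
  have hP : AnalyticAt ℂ P c := h.analyticAt_sub_sq_mul_of_eventually_analyticAt hreg
  have hPc : P c = 0 := by simp [P]
  have hR (z : ℂ) (hz : z ≠ c) : dslope P c z = (z - c) * Q z := by
    have := sub_smul_dslope P c z
    rw [hPc, sub_zero, smul_eq_mul] at this
    refine mul_left_cancel₀ (sub_ne_zero.2 hz) (this.trans ?_)
    simp only [P]
    ring
  have hRc : dslope P c c = 0 := by
    have hline := tendsto_add_mul_I_nhdsWithin_im_ne_zero c
    refine tendsto_nhds_unique ((analyticAt_dslope hP).continuousAt.tendsto.comp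
      (hline.mono_right nhdsWithin_le_nhds)) ?_
    have hlimI := hlim.const_mul I
    rw [mul_zero] at hlimI
    refine hlimI.congr' ?_
    filter_upwards [self_mem_nhdsWithin] with t (ht : 0 < t)
    rw [Function.comp_apply, hR _ (by simpa using ht.ne')]
    ring
  refine h.analyticAt_of_eventually_eq (analyticAt_dslope (analyticAt_dslope hP))
    (.of_forall fun z hz_im => ?_)
  have hz : z ≠ c := fun hzc => hz_im (by simp [hzc])
  have := sub_smul_dslope (dslope P c) c z
  rw [hRc, sub_zero, hR z hz, smul_eq_mul] at this
  exact (mul_left_cancel₀ (sub_ne_zero.2 hz) this).symm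

theorem eq_zero_of_forall_analyticAt (h : IsAxisTame Q) (hreg : ∀ x : ℝ, AnalyticAt ℂ Q x)
    {C : ℝ} (hC : ∀ z : ℂ, z.im ≠ 0 → z.im ^ 2 * ‖Q z‖ ≤ C * (1 + |z.im|)) (w : ℂ) : Q w = 0 := by
  have hlim : Tendsto (fun r : ℝ => 4 * (C * (1 + r)) / r ^ 2) atTop (𝓝 0) := by
    have hinv := tendsto_inv_atTop_zero (𝕜 := ℝ)
    have hsum := ((hinv.pow 2).add hinv).const_mul (4 * C)
    simp only [ne_eq, OfNat.ofNat_ne_zero, not_false_eq_true, zero_pow, add_zero, mul_zero] at hsum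
    refine hsum.congr' ?_
    filter_upwards [eventually_ne_atTop 0] with r hr
    field_simp
  refine norm_le_zero_iff.1 (ge_of_tendsto hlim ?_)
  filter_upwards [eventually_gt_atTop 0, eventually_ge_atTop |w.im|] with r hr hwr
  have hC0 : 0 ≤ C := by
    have := le_trans (by positivity) (hC I (by simp))
    simpa using this
  exact h.norm_le_of_im_sq_mul_norm_le hr (fun y _ => hreg y)
    (fun z hz hzr => (hC z hz).trans (by gcongr)) hwr

end IsAxisTame

end Rigidity

section ProductDefect

variable {f g k : ℝ → ℝ} {z : ℂ} {x c L : ℝ}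

/-- The failure of the product rule `cauchyTransform f * cauchyTransform g = cauchyTransform k`,
which is expected for `k = f * Hg + g * Hf` with `Hf`, `Hg` the Hilbert transforms of `f` and `g`.
On the real axis its value is the limit from off the axis, as `IsAxisTame` requires. -/
noncomputable def productDefect (f g k : ℝ → ℝ) : ℂ → ℂ :=
  extendFrom {z : ℂ | z.im ≠ 0} fun z =>
    cauchyTransform f z * cauchyTransform g z - cauchyTransform k z

lemma differentiableAt_cauchyTransform_mul_sub (hf : Integrable f) (hg : Integrable g)
    (hk : Integrable k) (hz : z.im ≠ 0) : DifferentiableAt ℂ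
      (fun z => cauchyTransform f z * cauchyTransform g z - cauchyTransform k z) z :=
  ((differentiableAt_cauchyTransform hf hz).fun_mul
    (differentiableAt_cauchyTransform hg hz)).fun_sub (differentiableAt_cauchyTransform hk hz)

lemma productDefect_of_im_ne_zero (hf : Integrable f) (hg : Integrable g) (hk : Integrable k)
    (hz : z.im ≠ 0) : productDefect f g k z =
      cauchyTransform f z * cauchyTransform g z - cauchyTransform k z :=
  extendFrom_eq (subset_closure hz) ((differentiableAt_cauchyTransform_mul_sub hf hg hk
    hz).continuousAt.tendsto.mono_left nhdsWithin_le_nhds)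

lemma eventually_comap_im_ne_zero : ∀ᶠ z : ℂ in comap im (𝓝[≠] 0), z.im ≠ 0 :=
  eventually_comap.2 (eventually_nhdsWithin_of_forall fun _ hy _ hz => hz.symm ▸ hy)

lemma isAxisTame_productDefect (hf : Integrable f) (hg : Integrable g) (hk : Integrable k) :
    IsAxisTame (productDefect f g k) where
  differentiableAt z hz := by
    refine (differentiableAt_cauchyTransform_mul_sub hf hg hk hz).congr_of_eventuallyEq ?_
    filter_upwards [continuous_im.continuousAt.eventually_ne hz] with w hw
    exact productDefect_of_im_ne_zero hf hg hk hw
  map_conj z hz := by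
    rw [productDefect_of_im_ne_zero hf hg hk hz,
      productDefect_of_im_ne_zero hf hg hk (by simpa using hz)]
    simp only [cauchyTransform_conj, map_sub, map_mul]
  tendsto_im_sq_mul := by
    have him : Tendsto (fun z : ℂ => (z.im : ℂ)) (comap im (𝓝[≠] 0)) (𝓝 0) :=
      (continuous_ofReal.tendsto' 0 0 ofReal_zero).comp
        (tendsto_comap.mono_right nhdsWithin_le_nhds)
    have hlim := ((tendsto_im_mul_cauchyTransform hf).mul (tendsto_im_mul_cauchyTransform hg)).sub
      (him.mul (tendsto_im_mul_cauchyTransform hk))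
    rw [mul_zero, sub_zero] at hlim
    refine hlim.congr' ?_
    filter_upwards [eventually_comap_im_ne_zero] with z hz
    rw [productDefect_of_im_ne_zero hf hg hk hz]
    ring
  apply_ofReal x := by
    refine congrArg lim (Filter.map_congr ?_)
    filter_upwards [self_mem_nhdsWithin] with z hz
    exact (productDefect_of_im_ne_zero hf hg hk hz).symm

lemma exists_im_sq_mul_norm_productDefect_le (hf : Integrable f) (hg : Integrable g)
    (hk : Integrable k) : ∃ C, ∀ z : ℂ, z.im ≠ 0 →
      z.im ^ 2 * ‖productDefect f g k z‖ ≤ C * (1 + |z.im|) := by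
  have hnonneg (φ : ℝ → ℝ) : 0 ≤ ∫ y, |φ y| := integral_nonneg fun y => abs_nonneg _
  refine ⟨(∫ y, |f y|) * (∫ y, |g y|) + ∫ y, |k y|, fun z hz => ?_⟩
  have hF := abs_im_mul_norm_cauchyTransform_le hf hz
  have hG := abs_im_mul_norm_cauchyTransform_le hg hz
  have hK := abs_im_mul_norm_cauchyTransform_le hk hz
  rw [productDefect_of_im_ne_zero hf hg hk hz, ← sq_abs]
  calc |z.im| ^ 2 * ‖cauchyTransform f z * cauchyTransform g z - cauchyTransform k z‖
      ≤ |z.im| ^ 2 * (‖cauchyTransform f z‖ * ‖cauchyTransform g z‖ + ‖cauchyTransform k z‖) := by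
        gcongr
        exact (norm_sub_le _ _).trans_eq (by rw [norm_mul])
    _ = |z.im| * ‖cauchyTransform f z‖ * (|z.im| * ‖cauchyTransform g z‖) +
        |z.im| * ‖cauchyTransform k z‖ * |z.im| := by ring
    _ ≤ (∫ y, |f y|) * (∫ y, |g y|) + (∫ y, |k y|) * |z.im| := by
        gcongr
    _ ≤ ((∫ y, |f y|) * (∫ y, |g y|) + ∫ y, |k y|) * (1 + |z.im|) := by
        linarith [hnonneg k, mul_nonneg (mul_nonneg (hnonneg f) (hnonneg g)) (abs_nonneg z.im)]

lemma isClosed_setOf_forall_abs_re_cauchyTransform_le (hf : Integrable f) (M : ℝ) :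
    IsClosed {x : ℝ | ∀ t ∈ Ioc (0 : ℝ) 1, |(cauchyTransform f (x + t * I)).re| ≤ M} := by
  simp only [Set.ofPred_forall]
  exact isClosed_biInter fun t ht => isClosed_le
    (continuous_re.comp (continuous_cauchyTransform_add_mul_I hf ht.1.ne')).abs continuous_const

lemma HasAbelHilbertAt.exists_abs_re_cauchyTransform_le (hL : HasAbelHilbertAt f L x)
    (hf : Integrable f) : ∃ M, ∀ t > (0 : ℝ), |(cauchyTransform f (x + t * I)).re| ≤ M := by
  refine exists_forall_pos_abs_le_of_tendsto (C := ∫ y, |f y|)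
    (integral_nonneg fun y => abs_nonneg (f y)) (fun t ht => ?_) hL
  have hnorm := abs_im_mul_norm_cauchyTransform_le hf (z := x + t * I) (by simpa using ht.ne')
  rw [show |((x : ℂ) + t * I).im| = t by simpa using ht.le, ← le_div_iff₀' ht] at hnorm
  exact (abs_re_le_norm _).trans hnorm

lemma abs_im_productDefect_le (hf : Integrable f) (hg : Integrable g) (hk : Integrable k)
    (hz : 0 < z.im) {M : ℝ} (hF : |(cauchyTransform f z).re| ≤ M)
    (hG : |(cauchyTransform g z).re| ≤ M) :
    |(productDefect f g k z).im| ≤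
      -(cauchyTransform (fun y => M * (|f y| + |g y|) + |k y|) z).im := by
  have hF_im := abs_im_cauchyTransform_le hf hz
  have hG_im := abs_im_cauchyTransform_le hg hz
  have hK_im := abs_im_cauchyTransform_le hk hz
  have hsum : Integrable fun y => |f y| + |g y| := hf.abs.add hg.abs
  rw [productDefect_of_im_ne_zero hf hg hk hz.ne', sub_im, mul_im,
    cauchyTransform_add (hsum.const_mul M) hk.abs hz.ne', cauchyTransform_const_mul,
    cauchyTransform_add hf.abs hg.abs hz.ne', add_im, im_ofReal_mul, add_im]
  calc _ ≤ |(cauchyTransform f z).re| * |(cauchyTransform g z).im| +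
        |(cauchyTransform f z).im| * |(cauchyTransform g z).re| + |(cauchyTransform k z).im| := by
        rw [← abs_mul, ← abs_mul]
        exact (abs_sub _ _).trans (add_le_add_left (abs_add_le _ _) _)
    _ ≤ M * -(cauchyTransform (fun y => |g y|) z).im +
        -(cauchyTransform (fun y => |f y|) z).im * M +
          -(cauchyTransform (fun y => |k y|) z).im := by
        gcongr
        · exact (abs_nonneg _).trans hF
        · exact (abs_nonneg _).trans hF_im
    _ = _ := by ring

lemma ae_tendsto_im_productDefect {Hf Hg : ℝ → ℝ} (hf : Integrable f) (hg : Integrable g)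
    (hk : Integrable fun x => f x * Hg x + g x * Hf x)
    (hHf : ∀ᵐ x : ℝ, HasAbelHilbertAt f (Hf x) x) (hHg : ∀ᵐ x : ℝ, HasAbelHilbertAt g (Hg x) x) :
    ∀ᵐ x : ℝ, Tendsto (fun t : ℝ =>
      (productDefect f g (fun x => f x * Hg x + g x * Hf x) (x + t * I)).im) (𝓝[>] 0) (𝓝 0) := by
  filter_upwards [hHf, hHg, ae_tendsto_im_cauchyTransform hf, ae_tendsto_im_cauchyTransform hg,
    ae_tendsto_im_cauchyTransform hk] with x hF_re hG_re hF_im hG_im hK_im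
  have hlim := ((hF_re.mul hG_im).add (hF_im.mul hG_re)).sub hK_im
  rw [show Hf x * -(π * g x) + -(π * f x) * Hg x - -(π * (f x * Hg x + g x * Hf x)) = 0 by ring]
    at hlim
  refine hlim.congr' ?_
  filter_upwards [self_mem_nhdsWithin] with t (ht : 0 < t)
  rw [productDefect_of_im_ne_zero hf hg hk (by simpa using ht.ne'), sub_im, mul_im]

lemma tendsto_mul_cauchyTransform_add_mul_I (hf : Integrable f) (c : ℝ) :
    Tendsto (fun t : ℝ => t * cauchyTransform f (c + t * I)) (𝓝[>] 0) (𝓝 0) := by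
  have hline : Tendsto (fun t : ℝ => (c + t * I : ℂ)) (𝓝[>] 0) (comap im (𝓝[≠] 0)) := by
    rw [tendsto_comap_iff, show im ∘ (fun t : ℝ => (c + t * I : ℂ)) = id by ext; simp]
    exact tendsto_id'.2 (nhdsGT_le_nhdsNE 0)
  simpa [Function.comp_def] using (tendsto_im_mul_cauchyTransform hf).comp hline

theorem analyticAt_productDefect {Hf Hg : ℝ → ℝ} (hf : Integrable f) (hg : Integrable g)
    (hk : Integrable fun x => f x * Hg x + g x * Hf x)
    (hHf : ∀ x ≠ c, HasAbelHilbertAt f (Hf x) x) (hHg : ∀ x ≠ c, HasAbelHilbertAt g (Hg x) x)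
    (hx : x ≠ c) :
    AnalyticAt ℂ (productDefect f g fun x => f x * Hg x + g x * Hf x) x := by
  let E (n : ℕ) : Set ℝ := {x | ∀ t ∈ Ioc (0 : ℝ) 1, |(cauchyTransform f (x + t * I)).re| ≤ n} ∩
    {x | ∀ t ∈ Ioc (0 : ℝ) 1, |(cauchyTransform g (x + t * I)).re| ≤ n}
  have hcover : ({c}ᶜ : Set ℝ) ⊆ ⋃ n, E n := fun y hy => by
    obtain ⟨M, hM⟩ := (hHf y hy).exists_abs_re_cauchyTransform_le hf
    obtain ⟨N, hN⟩ := (hHg y hy).exists_abs_re_cauchyTransform_le hg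
    obtain ⟨n, hn⟩ := exists_nat_ge (max M N)
    exact mem_iUnion.2 ⟨n, fun t ht => (hM t ht.1).trans ((le_max_left _ _).trans hn),
      fun t ht => (hN t ht.1).trans ((le_max_right _ _).trans hn)⟩
  have hne : ∀ᵐ x : ℝ, x ≠ c := Measure.ae_ne volume c
  exact (isAxisTame_productDefect hf hg hk).analyticAt_of_subset_iUnion isOpen_compl_singleton
    (fun n => (isClosed_setOf_forall_abs_re_cauchyTransform_le hf n).inter
      (isClosed_setOf_forall_abs_re_cauchyTransform_le hg n)) hcover
    (g := fun n y => n * (|f y| + |g y|) + |f y * Hg y + g y * Hf y|)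
    (fun n => ((hf.abs.add hg.abs).const_mul _).add hk.abs) (fun n y => by positivity)
    (fun n s hs t ht => abs_im_productDefect_le hf hg hk (by simpa using ht.1)
      (hs.1 t ht) (hs.2 t ht))
    (ae_tendsto_im_productDefect hf hg hk (hne.mono hHf) (hne.mono hHg)) hx

theorem productDefect_eq_zero {Hf Hg : ℝ → ℝ} (hf : Integrable f) (hg : Integrable g)
    (hk : Integrable fun x => f x * Hg x + g x * Hf x)
    (hHf : ∀ x ≠ c, HasAbelHilbertAt f (Hf x) x) (hHg : ∀ x ≠ c, HasAbelHilbertAt g (Hg x) x)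
    (hc : Tendsto (fun t : ℝ => t * (cauchyTransform f (c + t * I) * cauchyTransform g (c + t * I)))
      (𝓝[>] 0) (𝓝 0)) (z : ℂ) :
    productDefect f g (fun x => f x * Hg x + g x * Hf x) z = 0 := by
  have htame := isAxisTame_productDefect hf hg hk
  have hreg : ∀ x ≠ c, AnalyticAt ℂ (productDefect f g fun x => f x * Hg x + g x * Hf x) x :=
    fun x hx => analyticAt_productDefect hf hg hk hHf hHg hx
  obtain ⟨C, hC⟩ := exists_im_sq_mul_norm_productDefect_le hf hg hk
  refine htame.eq_zero_of_forall_analyticAt (fun x => ?_) hC z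
  rcases eq_or_ne x c with rfl | hx
  · refine htame.analyticAt_of_tendsto_mul (eventually_nhdsWithin_of_forall hreg) ?_
    have hlim := hc.sub (tendsto_mul_cauchyTransform_add_mul_I hk x)
    rw [sub_zero] at hlim
    refine hlim.congr' ?_
    filter_upwards [self_mem_nhdsWithin] with t (ht : 0 < t)
    rw [productDefect_of_im_ne_zero hf hg hk (by simpa using ht.ne'), mul_sub]
  · exact hreg x hx

theorem integral_mul_add_mul_eq_zero {Hf Hg : ℝ → ℝ} (hf : Integrable f) (hg : Integrable g)
    (hk : Integrable fun x => f x * Hg x + g x * Hf x)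
    (hHf : ∀ x ≠ c, HasAbelHilbertAt f (Hf x) x) (hHg : ∀ x ≠ c, HasAbelHilbertAt g (Hg x) x)
    (hc : Tendsto (fun t : ℝ => t * (cauchyTransform f (c + t * I) * cauchyTransform g (c + t * I)))
      (𝓝[>] 0) (𝓝 0)) :
    ∫ x, (f x * Hg x + g x * Hf x) = 0 := by
  have hinv : Tendsto (fun t : ℝ => (t * I : ℂ)⁻¹) atTop (𝓝 0) := by
    refine tendsto_inv₀_cobounded.comp (tendsto_norm_atTop_iff_cobounded.1 ?_)
    simpa using tendsto_abs_atTop_atTop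
  have hprod := ((tendsto_mul_cauchyTransform_atTop hf).mul
    (tendsto_mul_cauchyTransform_atTop hg)).mul hinv
  rw [mul_zero] at hprod
  refine ofReal_eq_zero.1 (tendsto_nhds_unique_of_eventuallyEq
    (tendsto_mul_cauchyTransform_atTop hk) hprod ?_)
  filter_upwards [eventually_gt_atTop 0] with t ht
  have hdefect := productDefect_eq_zero hf hg hk hHf hHg hc (t * I)
  rw [productDefect_of_im_ne_zero hf hg hk (by simpa using ht.ne'), sub_eq_zero] at hdefect
  have htI : (t * I : ℂ) ≠ 0 := mul_ne_zero (ofReal_ne_zero.2 ht.ne') I_ne_zero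
  rw [← hdefect]
  field_simp [htI]

end ProductDefect

section DivisionByCoordinate

variable {f : ℝ → ℝ} {z : ℂ} {L x : ℝ}

lemma mul_cauchyTransform_div (hf : Integrable f) (hg : Integrable fun y => f y / y)
    (hz : z.im ≠ 0) :
    z * cauchyTransform (fun y => f y / y) z = cauchyTransform f z + (∫ y, f y / y : ℝ) := by
  have hg' : Integrable fun y => ((f y / y : ℝ) : ℂ) := hg.ofReal
  rw [cauchyTransform, cauchyTransform, ← integral_const_mul, ← integral_complex_ofReal,
    ← integral_add (integrable_div_sub hf hz) hg']
  refine integral_congr_ae ?_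
  filter_upwards [Measure.ae_ne volume (0 : ℝ)] with y hy
  have hsub := sub_ofReal_ne_zero hz y
  have hy' : (y : ℂ) ≠ 0 := ofReal_ne_zero.2 hy
  push_cast
  field_simp
  ring

lemma HasAbelHilbertAt.div_self (hL : HasAbelHilbertAt f L x) (hf : Integrable f)
    (hg : Integrable fun y => f y / y) (hx : x ≠ 0) :
    HasAbelHilbertAt (fun y => f y / y) ((L + ∫ y, f y / y) / x) x := by
  have hmul : Tendsto (fun t : ℝ => t * (cauchyTransform (fun y => f y / y) (x + t * I)).im)
      (𝓝[>] 0) (𝓝 0) := by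
    simpa [Function.comp_def] using
      (continuous_im.tendsto 0).comp (tendsto_mul_cauchyTransform_add_mul_I hg x)
  have hlim := ((hL.add_const (∫ y, f y / y)).add hmul).div_const x
  rw [add_zero] at hlim
  refine hlim.congr' ?_
  filter_upwards [self_mem_nhdsWithin] with t (ht : 0 < t)
  have hre := congrArg re (mul_cauchyTransform_div hf hg (z := x + t * I) (by simpa using ht.ne'))
  simp only [mul_re, add_re, add_im, ofReal_re, ofReal_im, I_re, I_im, mul_zero, mul_one,
    sub_zero, add_zero, zero_add, mul_im] at hre
  rw [div_eq_iff hx]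
  linarith

lemma tendsto_mul_cauchyTransform_mul_cauchyTransform_div (hf : Integrable f)
    (hg : Integrable fun y => f y / y) :
    Tendsto (fun t : ℝ => t * (cauchyTransform f ((0 : ℝ) + t * I) *
      cauchyTransform (fun y => f y / y) ((0 : ℝ) + t * I))) (𝓝[>] 0) (𝓝 0) := by
  have hG := tendsto_mul_cauchyTransform_add_mul_I hg 0
  have hlim := hG.mul ((hG.const_mul I).sub_const ((∫ y, f y / y : ℝ) : ℂ))
  rw [zero_mul] at hlim
  refine hlim.congr' ?_
  filter_upwards [self_mem_nhdsWithin] with t (ht : 0 < t)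
  have hrel := mul_cauchyTransform_div hf hg (z := (0 : ℝ) + t * I) (by simpa using ht.ne')
  rw [ofReal_zero, zero_add] at hrel ⊢
  linear_combination (t : ℂ) * cauchyTransform (fun y => f y / y) (t * I) * hrel

end DivisionByCoordinate

lemma integral_eq_zero_of_odd {G E : Type*} [AddGroup G] [MeasurableSpace G] [MeasurableNeg G]
    {μ : Measure G} [μ.IsNegInvariant] [NormedAddCommGroup E] [NormedSpace ℝ E] {f : G → E}
    (hf : f.Odd) : ∫ x, f x ∂μ = 0 := by
  have hneg := integral_neg_eq_self f μ
  simp only [hf _, integral_neg] at hneg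
  have : IsAddTorsionFree E := .of_isTorsionFree ℝ E
  exact self_eq_neg.1 hneg.symm

theorem stmt4_general (ρ H : ℝ → ℝ) (hint : Integrable ρ)
    (hH : ∀ x ≠ 0, Tendsto (fun ε : ℝ => ∫ y in {y : ℝ | ε ≤ |x - y|}, ρ y / (x - y))
      (𝓝[>] 0) (𝓝 (H x)))
    (h1 : Integrable fun x => H x * ρ x / x) (h2 : Integrable fun x => ρ x / x) :
    ∫ x, H x * (1 / x) * ρ x = -(∫ x, ρ x / x) ^ 2 / 2 := by
  set m := ∫ x, ρ x / x with hm
  have hF : ∀ x ≠ 0, HasAbelHilbertAt ρ (H x) x := fun x hx =>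
    hasAbelHilbertAt_of_tendsto_truncatedHilbert hint (hH x hx)
  have hG : ∀ x ≠ 0, HasAbelHilbertAt (fun y => ρ y / y) ((H x + m) / x) x := fun x hx =>
    (hF x hx).div_self hint h2 hx
  have hk (x : ℝ) : ρ x * ((H x + m) / x) + ρ x / x * H x =
      2 * (H x * ρ x / x) + m * (ρ x / x) := by ring
  have hzero := integral_mul_add_mul_eq_zero hint h2
    (((h1.const_mul 2).add (h2.const_mul m)).congr (.of_forall fun x => (hk x).symm)) hF hG
    (tendsto_mul_cauchyTransform_mul_cauchyTransform_div hint h2)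
  simp only [hk] at hzero
  rw [integral_add (h1.const_mul 2) (h2.const_mul m), integral_const_mul, integral_const_mul,
    ← hm] at hzero
  have hcomm : ∀ x, H x * (1 / x) * ρ x = H x * ρ x / x := fun x => by ring
  simp only [hcomm]
  linarith

/-- For an even probability density ρ, ∫ H(ρ)(x) (1/x) ρ(x) dx = 0, where H(ρ) is the
principal value Hilbert transform of ρ. -/
theorem stmt4 (ρ : ℝ → ℝ) (hρ : ∀ x, 0 ≤ ρ x) (heven : ∀ x, ρ (-x) = ρ x)
    (hint : Integrable ρ) (hprob : ∫ x, ρ x = 1)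
    (H : ℝ → ℝ)
    (hH : ∀ x : ℝ, Tendsto (fun ε : ℝ => ∫ y in {y : ℝ | ε ≤ |x - y|}, ρ y / (x - y))
        (nhdsWithin 0 (Set.Ioi 0)) (nhds (H x)))
    (h1 : Integrable (fun x => H x * ρ x / x))
    (h2 : Integrable (fun x => ρ x / x))
    (h3 : Integrable (fun p : ℝ × ℝ => ρ p.1 * ρ p.2 / (p.1 * p.2))) :
    ∫ x, H x * (1 / x) * ρ x = 0 := by
  have hodd : ∫ x, ρ x / x = 0 := integral_eq_zero_of_odd fun x => by rw [heven, div_neg]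
  rw [stmt4_general ρ H hint (fun x _ => hH x) h1 h2, hodd,
    zero_pow two_ne_zero, neg_zero, zero_div]
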